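/- arXiv:2105.13615 — 9 statements merged into one kernel-verified Lean document; each statement's English description precedes it below -/
import Mathlib

section
/- For every n ≥ 1, every essential cover of the n-dimensional hypercube consists of at least (1/2)(√(4n+1) + 1) hyperplanes. -/
open scoped Classical

/-- Hyperplanes with normals `v i` and constants `μ i` form an essential cover of the
`n`-dimensional hypercube `{-1,1}^n`. -/
def IsEssentialCover (n k : ℕ) (v : Fin k → Fin n → ℝ) (μ : Fin k → ℝ) : Prop :=
  (∀ i, v i ≠ 0) ∧
  (∀ x : Fin n → ℝ, (∀ j, x j = 1 ∨ x j = -1) → ∃ i, ∑ j, x j * v i j = μ i) ∧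
  (∀ j, ∃ i, v i j ≠ 0) ∧
  (∀ i, ∃ x : Fin n → ℝ, (∀ j, x j = 1 ∨ x j = -1) ∧ (∑ j, x j * v i j = μ i) ∧
    ∀ i', i' ≠ i → ∑ j, x j * v i' j ≠ μ i')

/-- Weighted injectivity of the inclusion operator from level `d` to level `d+1`. -/
theorem weighted_up_injective {ι : Type*} [DecidableEq ι] (w : ι → ℝ) (d : ℕ) :
    ∀ (U : Finset ι) (g : Finset ι → ℝ), (∀ i ∈ U, w i ≠ 0) → 2 * d + 1 ≤ U.card →
      (∀ T ⊆ U, T.card = d + 1 → ∑ i ∈ T, w i * g (T.erase i) = 0) →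
      ∀ A ⊆ U, A.card = d → g A = 0 := by
  induction d with
  | zero =>
    intro U g hw hU hT A hA hAc
    have hA0 : A = ∅ := Finset.card_eq_zero.mp hAc
    subst hA0
    obtain ⟨c, hc⟩ : U.Nonempty := Finset.card_pos.mp (by omega)
    have h1 := hT {c} (by simpa using hc) (by simp)
    simp only [Finset.sum_singleton] at h1
    have h2 : ({c} : Finset ι).erase c = ∅ := by simp
    rw [h2] at h1
    exact (mul_eq_zero.mp h1).resolve_left (hw c hc)
  | succ d ih =>
    intro U g hw hU hT A hA hAc
    obtain ⟨c, hcU, hcA⟩ : ∃ c ∈ U, c ∉ A := by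
      by_contra! hcon
      have := Finset.card_le_card (show U ⊆ A from hcon)
      omega
    have key : ∀ i ∈ A, w i * g ((insert c A).erase i) = w c * g A := by
      intro i hi
      have hic : i ≠ c := fun h => hcA (h ▸ hi)
      have hiU := hA hi
      have hwi := hw i hiU
      have hwc := hw c hcU
      have hsub : ((U.erase i).erase c) ⊆ U :=
        (Finset.erase_subset _ _).trans (Finset.erase_subset _ _)
      have h0 := ih ((U.erase i).erase c)
        (fun S => w i * g (insert c S) - w c * g (insert i S))
        (fun j hj => hw j (hsub hj))
        (by
          rw [Finset.card_erase_of_mem (by simp [hcU, hic.symm]), Finset.card_erase_of_mem hiU]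
          omega)
        (by
          intro T hTU hTc
          have hcT : c ∉ T := fun h => by simpa using hTU h
          have hiT : i ∉ T := fun h => by simpa using hTU h
          have e1 := hT (insert c T) (Finset.insert_subset hcU (hTU.trans hsub))
            (by rw [Finset.card_insert_of_notMem hcT, hTc])
          have e2 := hT (insert i T) (Finset.insert_subset hiU (hTU.trans hsub))
            (by rw [Finset.card_insert_of_notMem hiT, hTc])
          rw [Finset.sum_insert hcT, Finset.erase_insert hcT] at e1
          rw [Finset.sum_insert hiT, Finset.erase_insert hiT] at e2
          have e3 : ∑ j ∈ T, w j * g ((insert c T).erase j)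
              = ∑ j ∈ T, w j * g (insert c (T.erase j)) := by
            refine Finset.sum_congr rfl fun j hj => ?_
            rw [Finset.erase_insert_of_ne (ne_of_mem_of_not_mem hj hcT).symm]
          have e4 : ∑ j ∈ T, w j * g ((insert i T).erase j)
              = ∑ j ∈ T, w j * g (insert i (T.erase j)) := by
            refine Finset.sum_congr rfl fun j hj => ?_
            rw [Finset.erase_insert_of_ne (ne_of_mem_of_not_mem hj hiT).symm]
          rw [e3] at e1
          rw [e4] at e2
          have e5 : ∑ j ∈ T, w j * (w i * g (insert c (T.erase j)) - w c * g (insert i (T.erase j)))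
              = w i * ∑ j ∈ T, w j * g (insert c (T.erase j))
                - w c * ∑ j ∈ T, w j * g (insert i (T.erase j)) := by
            rw [Finset.mul_sum, Finset.mul_sum, ← Finset.sum_sub_distrib]
            exact Finset.sum_congr rfl fun j _ => by ring
          rw [e5]
          linear_combination w i * e1 - w c * e2)
        (A.erase i)
        (by
          intro j hj
          rw [Finset.mem_erase] at hj
          simp only [Finset.mem_erase]
          exact ⟨fun h => hcA (h ▸ hj.2), hj.1, hA hj.2⟩)
        (by rw [Finset.card_erase_of_mem hi, hAc]; rfl)
      simp only [Finset.insert_erase hi] at h0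
      rw [Finset.erase_insert_of_ne hic.symm]
      linarith
    have h1 := hT (insert c A) (Finset.insert_subset hcU hA)
      (by rw [Finset.card_insert_of_notMem hcA, hAc])
    rw [Finset.sum_insert hcA, Finset.erase_insert hcA, Finset.sum_congr rfl key,
      Finset.sum_const, nsmul_eq_mul] at h1
    have h2 : ((A.card : ℝ) + 1) * (w c * g A) = 0 := by linarith
    have h3 : ((A.card : ℝ) + 1) ≠ 0 := by positivity
    have h4 := (mul_eq_zero.mp h2).resolve_left h3
    exact (mul_eq_zero.mp h4).resolve_left (hw c hcU)

/-- The vertices of the cube. -/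
noncomputable def cubeQ (n : ℕ) : Finset (Fin n → ℝ) :=
  Fintype.piFinset (fun _ => ({1, -1} : Finset ℝ))

theorem mem_cubeQ {n : ℕ} {x : Fin n → ℝ} : x ∈ cubeQ n ↔ ∀ j, x j = 1 ∨ x j = -1 := by
  simp [cubeQ, Fintype.mem_piFinset]

/-- Unnormalised Fourier coefficients. -/
noncomputable def fourierC {n : ℕ} (f : (Fin n → ℝ) → ℝ) (S : Finset (Fin n)) : ℝ :=
  ∑ x ∈ cubeQ n, f x * ∏ i ∈ S, x i

/-- Symmetric difference with a point. -/
noncomputable def toggle {n : ℕ} (i : Fin n) (S : Finset (Fin n)) : Finset (Fin n) :=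
  if i ∈ S then S.erase i else insert i S

theorem mul_char {n : ℕ} {x : Fin n → ℝ} (hx : x ∈ cubeQ n) (i : Fin n) (S : Finset (Fin n)) :
    x i * ∏ j ∈ S, x j = ∏ j ∈ toggle i S, x j := by
  unfold toggle
  split_ifs with h
  · rw [← Finset.mul_prod_erase S x h]
    rcases mem_cubeQ.mp hx i with h1 | h1 <;> rw [h1] <;> ring
  · rw [Finset.prod_insert h]

theorem fourierC_mul_affine {n : ℕ} (f : (Fin n → ℝ) → ℝ) (w : Fin n → ℝ) (m : ℝ)
    (S : Finset (Fin n)) :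
    fourierC (fun x => (∑ j, x j * w j - m) * f x) S
      = ∑ i, w i * fourierC f (toggle i S) - m * fourierC f S := by
  unfold fourierC
  simp only [Finset.mul_sum]
  rw [Finset.sum_comm, ← Finset.sum_sub_distrib]
  refine Finset.sum_congr rfl fun x hx => ?_
  simp only [← mul_char hx]
  rw [sub_mul, sub_mul, Finset.sum_mul, Finset.sum_mul]
  congr 1
  · exact Finset.sum_congr rfl fun i _ => by ring
  · ring

theorem card_toggle_ge {n : ℕ} (i : Fin n) (S : Finset (Fin n)) :
    S.card ≤ (toggle i S).card + 1 := by
  unfold toggle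
  split_ifs with h
  · rw [Finset.card_erase_of_mem h]; omega
  · rw [Finset.card_insert_of_notMem h]; omega

theorem fourierC_one {n : ℕ} (S : Finset (Fin n)) (hS : S.Nonempty) :
    fourierC (fun _ => 1) S = 0 := by
  obtain ⟨i, hi⟩ := hS
  unfold fourierC cubeQ
  have h1 : ∀ x : Fin n → ℝ, (1 : ℝ) * ∏ i ∈ S, x i = ∏ i, (if i ∈ S then x i else 1) := by
    intro x
    rw [one_mul, Finset.prod_ite_mem, Finset.univ_inter]
  simp only [h1]
  rw [← Finset.prod_univ_sum (fun _ => ({1, -1} : Finset ℝ)) (fun i y => if i ∈ S then y else 1)]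
  refine Finset.prod_eq_zero (Finset.mem_univ i) ?_
  rw [Finset.sum_pair (by norm_num)]
  simp [hi]

theorem fourierC_prod {n k : ℕ} (v : Fin k → Fin n → ℝ) (μ : Fin k → ℝ) (J : Finset (Fin k)) :
    ∀ S : Finset (Fin n), J.card < S.card →
      fourierC (fun x => ∏ i ∈ J, (∑ j, x j * v i j - μ i)) S = 0 := by
  induction J using Finset.induction_on with
  | empty =>
    intro S hS
    simp only [Finset.prod_empty]
    exact fourierC_one S (Finset.card_pos.mp (by simpa using hS))
  | insert a J ha ih =>
    intro S hS
    rw [Finset.card_insert_of_notMem ha] at hS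
    simp only [Finset.prod_insert ha]
    rw [fourierC_mul_affine (fun x => ∏ i ∈ J, (∑ j, x j * v i j - μ i))]
    rw [ih S (by omega), Finset.sum_eq_zero]
    · simp
    · intro i _
      rw [ih _ (by have := card_toggle_ge i S; omega), mul_zero]

theorem eq_zero_of_fourierC {n : ℕ} (f : (Fin n → ℝ) → ℝ) (hf : ∀ S, fourierC f S = 0)
    {y : Fin n → ℝ} (hy : y ∈ cubeQ n) : f y = 0 := by
  have h1 : ∑ S : Finset (Fin n), fourierC f S * ∏ i ∈ S, y i
      = ∑ x ∈ cubeQ n, f x * ∏ i, (1 + x i * y i) := by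
    unfold fourierC
    simp only [Finset.sum_mul]
    rw [Finset.sum_comm]
    refine Finset.sum_congr rfl fun x _ => ?_
    rw [Finset.prod_one_add, Finset.mul_sum, Finset.powerset_univ]
    refine Finset.sum_congr rfl fun S _ => ?_
    rw [Finset.prod_mul_distrib]; ring
  rw [Finset.sum_eq_single_of_mem y hy] at h1
  · simp only [hf, zero_mul, Finset.sum_const_zero] at h1
    refine (mul_eq_zero.mp h1.symm).resolve_right ?_
    refine Finset.prod_ne_zero_iff.mpr fun i _ => ?_
    nlinarith [mul_self_nonneg (y i)]
  · intro x hx hxy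
    obtain ⟨i, hi⟩ := Function.ne_iff.mp hxy
    rw [Finset.prod_eq_zero (Finset.mem_univ i), mul_zero]
    rcases mem_cubeQ.mp hx i with h | h <;> rcases mem_cubeQ.mp hy i with h' | h' <;>
      simp_all

/-- A nonzero function of degree at most `D` supported on a hyperplane: the normal has at most
`2 * D` nonzero coordinates. -/
theorem support_card_le {n D : ℕ} (f : (Fin n → ℝ) → ℝ) (w : Fin n → ℝ) (m : ℝ)
    (hdeg : ∀ S : Finset (Fin n), D < S.card → fourierC f S = 0)
    (hsupp : ∀ x ∈ cubeQ n, (∑ j, x j * w j - m) * f x = 0)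
    {y : Fin n → ℝ} (hy : y ∈ cubeQ n) (hfy : f y ≠ 0) :
    (Finset.univ.filter (fun j => w j ≠ 0)).card ≤ 2 * D := by
  have hex : ∃ S, fourierC f S ≠ 0 := by
    by_contra! hcon
    exact hfy (eq_zero_of_fourierC f hcon hy)
  obtain ⟨S0, hS0, hmax⟩ := Finset.exists_max_image
    (Finset.univ.filter (fun S : Finset (Fin n) => fourierC f S ≠ 0)) Finset.card
    (by obtain ⟨S, hS⟩ := hex; exact ⟨S, by simpa using hS⟩)
  have hS0' : fourierC f S0 ≠ 0 := by simpa using hS0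
  have hbig : ∀ S : Finset (Fin n), S0.card < S.card → fourierC f S = 0 := by
    intro S hS
    by_contra hne
    have := hmax S (by simpa using hne)
    omega
  have hS0D : S0.card ≤ D := by
    by_contra! hlt
    exact hS0' (hdeg S0 hlt)
  have hrel : ∀ T : Finset (Fin n), T.card = S0.card + 1 →
      ∑ i ∈ T, w i * fourierC f (T.erase i) = 0 := by
    intro T hT
    have h1 := fourierC_mul_affine f w m T
    have h2 : fourierC (fun x => (∑ j, x j * w j - m) * f x) T = 0 := by
      unfold fourierC
      refine Finset.sum_eq_zero fun x hx => ?_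
      simp only [hsupp x hx, zero_mul]
    rw [h2, hbig T (by omega), mul_zero, sub_zero] at h1
    rw [h1]
    rw [← Finset.sum_subset (Finset.subset_univ T)]
    · refine Finset.sum_congr rfl fun i hi => ?_
      simp [toggle, hi]
    · intro i _ hi
      rw [hbig, mul_zero]
      simp only [toggle, hi, if_false]
      rw [Finset.card_insert_of_notMem hi]; omega
  by_contra! hlt
  set U := Finset.univ.filter (fun j => w j ≠ 0) with hU
  have hmemU : ∀ j, j ∈ U ↔ w j ≠ 0 := by intro j; simp [hU]
  have hsplit : (S0 \ U) ∪ (S0 ∩ U) = S0 := Finset.sdiff_union_inter S0 U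
  have hcard : (S0 \ U).card + (S0 ∩ U).card = S0.card := Finset.card_sdiff_add_card_inter S0 U
  have hz := weighted_up_injective w (S0 ∩ U).card U (fun S => fourierC f ((S0 \ U) ∪ S))
    (fun i hi => (hmemU i).mp hi) (by omega)
    (by
      intro T hTU hTc
      have hdisj : Disjoint (S0 \ U) T :=
        Finset.disjoint_of_subset_right hTU Finset.sdiff_disjoint
      have h1 := hrel ((S0 \ U) ∪ T) (by rw [Finset.card_union_of_disjoint hdisj]; omega)
      rw [Finset.sum_union hdisj, Finset.sum_eq_zero, zero_add] at h1
      · rw [← h1]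
        refine Finset.sum_congr rfl fun i hi => ?_
        have : i ∉ S0 \ U := fun h => Finset.disjoint_left.mp hdisj h hi
        rw [Finset.erase_union_distrib, Finset.erase_eq_of_notMem this]
      · intro i hi
        have : w i = 0 := by
          by_contra hne
          exact (Finset.mem_sdiff.mp hi).2 ((hmemU i).mpr hne)
        rw [this, zero_mul])
    (S0 ∩ U) Finset.inter_subset_right rfl
  simp only [hsplit] at hz
  exact hS0' hz

theorem essential_cover_card {n k : ℕ}
    (v : Fin k → Fin n → ℝ) (μ : Fin k → ℝ) (h : IsEssentialCover n k v μ) :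
    n ≤ k * (k - 1) := by
  obtain ⟨-, hcov, hE2, hE3⟩ := h
  have hsup : ∀ i, (Finset.univ.filter (fun j => v i j ≠ 0)).card ≤ 2 * (k - 1) := by
    intro i
    obtain ⟨y, hy, -, hy2⟩ := hE3 i
    refine support_card_le
      (fun x => ∏ i' ∈ Finset.univ.erase i, (∑ j, x j * v i' j - μ i')) (v i) (μ i) ?_ ?_
      (mem_cubeQ.mpr hy) ?_
    · intro S hS
      refine fourierC_prod v μ _ S ?_
      rwa [Finset.card_erase_of_mem (Finset.mem_univ i), Finset.card_univ, Fintype.card_fin]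
    · intro x hx
      rw [Finset.mul_prod_erase Finset.univ (fun i' => ∑ j, x j * v i' j - μ i')
        (Finset.mem_univ i)]
      obtain ⟨i', hi'⟩ := hcov x (mem_cubeQ.mp hx)
      exact Finset.prod_eq_zero (Finset.mem_univ i') (by rw [hi', sub_self])
    · refine Finset.prod_ne_zero_iff.mpr fun i' hi' => ?_
      exact sub_ne_zero.mpr (hy2 i' (Finset.ne_of_mem_erase hi'))
  have htwo : ∀ j, 2 ≤ (Finset.univ.filter (fun i => v i j ≠ 0)).card := by
    intro j
    obtain ⟨i, hi⟩ := hE2 j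
    suffices hs : ∃ i', i' ≠ i ∧ v i' j ≠ 0 by
      obtain ⟨i', hne, hi'⟩ := hs
      have : 1 < (Finset.univ.filter (fun i => v i j ≠ 0)).card :=
        Finset.one_lt_card.mpr ⟨i', by simpa using hi', i, by simpa using hi, hne⟩
      exact this
    by_contra! hcon
    obtain ⟨y, hy, hy1, hy2⟩ := hE3 i
    have hsum : ∀ i', ∑ l, Function.update y j (-y j) l * v i' l
        = ∑ l, y l * v i' l - 2 * (y j * v i' j) := by
      intro i'
      rw [← Finset.add_sum_erase _ _ (Finset.mem_univ j),
        ← Finset.add_sum_erase _ (fun l => y l * v i' l) (Finset.mem_univ j)]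
      have : ∑ l ∈ Finset.univ.erase j, Function.update y j (-y j) l * v i' l
          = ∑ l ∈ Finset.univ.erase j, y l * v i' l := by
        refine Finset.sum_congr rfl fun l hl => ?_
        rw [Function.update_of_ne (Finset.ne_of_mem_erase hl)]
      rw [this, Function.update_self]
      ring
    obtain ⟨i', hi'⟩ := hcov (Function.update y j (-y j)) (by
      intro l
      by_cases hl : l = j
      · subst hl
        rw [Function.update_self]
        rcases hy l with h | h <;> rw [h] <;> norm_num
      · rw [Function.update_of_ne hl]
        exact hy l)
    rw [hsum] at hi'
    by_cases hii : i' = i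
    · subst hii
      have h0 : y j * v i' j = 0 := by linarith
      rcases mul_eq_zero.mp h0 with h | h
      · rcases hy j with h' | h' <;> rw [h] at h' <;> norm_num at h'
      · exact hi h
    · rw [hcon i' hii] at hi'
      exact hy2 i' hii (by linarith)
  have hdc := Finset.sum_card_bipartiteAbove_eq_sum_card_bipartiteBelow
    (s := (Finset.univ : Finset (Fin k))) (t := (Finset.univ : Finset (Fin n)))
    (fun i j => v i j ≠ 0)
  have hle : ∑ i : Fin k, (Finset.univ.filter (fun j => v i j ≠ 0)).card ≤ k * (2 * (k - 1)) := by
    have := Finset.sum_le_card_nsmul Finset.univ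
      (fun i : Fin k => (Finset.univ.filter (fun j => v i j ≠ 0)).card) _ (fun i _ => hsup i)
    simpa using this
  have hge : n * 2 ≤ ∑ j : Fin n, (Finset.univ.filter (fun i => v i j ≠ 0)).card := by
    have := Finset.card_nsmul_le_sum Finset.univ
      (fun j : Fin n => (Finset.univ.filter (fun i => v i j ≠ 0)).card) _ (fun j _ => htwo j)
    simpa using this
  unfold Finset.bipartiteAbove Finset.bipartiteBelow at hdc
  have h3 : n * 2 ≤ k * (2 * (k - 1)) := by
    refine hge.trans (le_trans (le_of_eq ?_) hle)
    convert hdc.symm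
  nlinarith

/-- Every essential cover of the `n`-cube has at least `(√(4n+1)+1)/2` hyperplanes. -/
theorem essential_cover_sqrt_lower_bound (n k : ℕ) (hn : 1 ≤ n)
    (v : Fin k → Fin n → ℝ) (μ : Fin k → ℝ) (h : IsEssentialCover n k v μ) :
    (Real.sqrt (4 * n + 1) + 1) / 2 ≤ (k : ℝ) := by
  have h1 := essential_cover_card v μ h
  have hk : 1 ≤ k := by
    rcases Nat.eq_zero_or_pos k with h0 | h0
    · subst h0; omega
    · exact h0
  have hk' : (1 : ℝ) ≤ k := by exact_mod_cast hk
  have h2 : (n : ℝ) ≤ k * (k - 1) := by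
    have : ((n : ℕ) : ℝ) ≤ ((k * (k - 1) : ℕ) : ℝ) := by exact_mod_cast h1
    rwa [Nat.cast_mul, Nat.cast_sub hk, Nat.cast_one] at this
  have h3 : Real.sqrt (4 * n + 1) ≤ 2 * k - 1 := by
    rw [Real.sqrt_le_left (by linarith)]
    nlinarith
  linarith
end

section
/- If hyperplanes h_1,…,h_k with normals v_1,…,v_k ∈ ℝ^n and constants μ_1,…,μ_k form an essential cover of the n-dimensional hypercube, then for every i ∈ [k] the number of nonzero coordinates of v_i satisfies ‖v_i‖_0 < 2k. -/
open scoped Classical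

lemma alt_sum_zero {ι α : Type*} (w : ι → α → ℝ) (c : ι → ℝ) (A : Finset α) :
    ∀ I : Finset ι, I.card < A.card →
      ∑ S ∈ A.powerset, (-1 : ℝ) ^ S.card * ∏ i ∈ I, (c i + ∑ j ∈ S, w i j) = 0 := by
  induction A using Finset.induction_on with
  | empty => intro I hI; simp at hI
  | insert a A ha ih =>
    intro I hI
    rw [Finset.card_insert_of_notMem ha] at hI
    rw [Finset.sum_powerset_insert ha]
    have key : ∀ S ∈ A.powerset,
        (-1 : ℝ) ^ (insert a S).card * ∏ i ∈ I, (c i + ∑ j ∈ insert a S, w i j)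
        = - ((-1 : ℝ) ^ S.card * ∏ i ∈ I, (c i + ∑ j ∈ S, w i j))
          - ∑ t ∈ I.powerset.erase I, (∏ i ∈ I \ t, w i a) *
            ((-1 : ℝ) ^ S.card * ∏ i ∈ t, (c i + ∑ j ∈ S, w i j)) := by
      intro S hS
      have haS : a ∉ S := fun h => ha (Finset.mem_powerset.1 hS h)
      have e : ∏ i ∈ I, (c i + ∑ j ∈ insert a S, w i j)
          = ∏ i ∈ I, ((c i + ∑ j ∈ S, w i j) + w i a) := by
        refine Finset.prod_congr rfl fun i _ => ?_
        rw [Finset.sum_insert haS]; ring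
      rw [e, Finset.prod_add, Finset.card_insert_of_notMem haS,
        ← Finset.add_sum_erase _ _ (Finset.mem_powerset_self I), pow_succ, mul_add,
        Finset.mul_sum, sub_eq_add_neg, ← Finset.sum_neg_distrib]
      congr 1
      · simp
      · refine Finset.sum_congr rfl fun t _ => ?_
        ring
    rw [Finset.sum_congr rfl key, Finset.sum_sub_distrib, Finset.sum_neg_distrib,
      Finset.sum_comm]
    have z : ∑ t ∈ I.powerset.erase I, ∑ S ∈ A.powerset, (∏ i ∈ I \ t, w i a) *
            ((-1 : ℝ) ^ S.card * ∏ i ∈ t, (c i + ∑ j ∈ S, w i j)) = 0 := by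
      refine Finset.sum_eq_zero fun t ht => ?_
      rw [Finset.mem_erase, Finset.mem_powerset] at ht
      have : t.card < I.card := Finset.card_lt_card (ht.2.ssubset_of_ne ht.1)
      rw [← Finset.mul_sum, ih t (by omega), mul_zero]
    rw [z]; ring

lemma cover_card {ι α : Type*} (w : ι → α → ℝ) (c : ι → ℝ) (A : Finset α) (I : Finset ι)
    (hc : ∀ i ∈ I, c i ≠ 0)
    (hS : ∀ S ⊆ A, S.Nonempty → ∃ i ∈ I, c i + ∑ j ∈ S, w i j = 0) : A.card ≤ I.card := by
  by_contra! hlt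
  have h := alt_sum_zero w c A I hlt
  rw [Finset.sum_eq_single ∅] at h
  · simp [Finset.prod_eq_zero_iff] at h
    obtain ⟨i, hi, h0⟩ := h
    exact hc i hi h0
  · intro S hSA hne
    obtain ⟨i, hi, h0⟩ := hS S (Finset.mem_powerset.1 hSA) (Finset.nonempty_iff_ne_empty.2 hne)
    rw [Finset.prod_eq_zero hi h0, mul_zero]
  · intro h; simp at h

lemma half_bound (n k : ℕ) (v : Fin k → Fin n → ℝ) (μ : Fin k → ℝ)
    (h1 : ∀ x : Fin n → ℝ, (∀ j, x j = 1 ∨ x j = -1) → ∃ i, ∑ j, x j * v i j = μ i)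
    (i : Fin k) (x : Fin n → ℝ) (hx : ∀ j, x j = 1 ∨ x j = -1)
    (hi : ∑ j, x j * v i j = μ i) (hne : ∀ i', i' ≠ i → ∑ j, x j * v i' j ≠ μ i')
    (A : Finset (Fin n))
    (hA : ∀ S ⊆ A, S.Nonempty → ∑ j ∈ S, x j * v i j ≠ 0) : A.card ≤ k - 1 := by
  have := cover_card (fun i' j => -2 * (x j * v i' j)) (fun i' => ∑ j, x j * v i' j - μ i') A
    (Finset.univ.erase i) ?_ ?_
  · simpa [Finset.card_erase_of_mem] using this
  · intro i' hi'
    exact sub_ne_zero.2 (hne i' (Finset.ne_of_mem_erase hi'))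
  · intro S hS hSn
    obtain ⟨i', hi'⟩ := h1 (fun j => if j ∈ S then - x j else x j) (by
      intro j
      rcases hx j with h | h <;> by_cases hj : j ∈ S <;> simp [h, hj])
    have e : ∀ i', ∑ j, (if j ∈ S then - x j else x j) * v i' j
        = ∑ j, x j * v i' j + ∑ j ∈ S, -2 * (x j * v i' j) := by
      intro i'
      have : ∑ j ∈ S, -2 * (x j * v i' j) = ∑ j, if j ∈ S then -2 * (x j * v i' j) else 0 := by
        simp
      rw [this, ← Finset.sum_add_distrib]
      refine Finset.sum_congr rfl fun j _ => ?_
      split_ifs <;> ring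
    rw [e] at hi'
    refine ⟨i', Finset.mem_erase.2 ⟨?_, Finset.mem_univ _⟩, by linarith⟩
    rintro rfl
    rw [← Finset.mul_sum] at hi'
    exact hA S hS hSn (by linarith)

/-- In an essential cover, every normal vector has fewer than `2k` nonzero coordinates. -/
theorem essential_cover_sparse_normals (n k : ℕ)
    (v : Fin k → Fin n → ℝ) (μ : Fin k → ℝ) (h : IsEssentialCover n k v μ) (i : Fin k) :
    (Finset.univ.filter fun j => v i j ≠ 0).card < 2 * k := by
  obtain ⟨-, h1, -, h3⟩ := h
  obtain ⟨x, hx, hi, hne⟩ := h3 i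
  have hk : 0 < k := i.pos
  have a1 := half_bound n k v μ h1 i x hx hi hne
    (Finset.univ.filter fun j => 0 < x j * v i j) (by
      intro S hS hn
      exact (Finset.sum_pos (fun j hj => (Finset.mem_filter.1 (hS hj)).2) hn).ne')
  have a2 := half_bound n k v μ h1 i x hx hi hne
    (Finset.univ.filter fun j => x j * v i j < 0) (by
      intro S hS hn
      exact (Finset.sum_neg (fun j hj => (Finset.mem_filter.1 (hS hj)).2) hn).ne)
  have hsub : (Finset.univ.filter fun j => v i j ≠ 0) ⊆
      (Finset.univ.filter fun j => 0 < x j * v i j) ∪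
      (Finset.univ.filter fun j => x j * v i j < 0) := by
    intro j hj
    have hv := (Finset.mem_filter.1 hj).2
    have hxj : x j ≠ 0 := by rcases hx j with h | h <;> rw [h] <;> norm_num
    have := lt_or_gt_of_ne (mul_ne_zero hxj hv)
    simp only [Finset.mem_union, Finset.mem_filter, Finset.mem_univ, true_and]
    tauto
  have := (Finset.card_le_card hsub).trans (Finset.card_union_le _ _)
  omega
end

section
/- For every v ∈ ℝ^n with ‖v‖_0 > 0 and every a ∈ ℝ, if x is drawn uniformly at random from {−1,1}^n then Pr[⟨x,v⟩ = a] ≤ 1/√(‖v‖_0). -/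
open scoped Classical

lemma lo_central (m : ℕ) : m.centralBinom ^ 2 * (2 * m + 1) ≤ 16 ^ m := by
  induction m with
  | zero => simp
  | succ m ih =>
    have h := Nat.succ_mul_centralBinom_succ m
    set C := m.centralBinom
    set D := (m + 1).centralBinom
    have h2 : (m + 1) ^ 2 * D ^ 2 = 4 * (2 * m + 1) ^ 2 * C ^ 2 := by
      rw [← mul_pow, h]; ring
    have hp : 0 < (m + 1) ^ 2 := by positivity
    refine Nat.le_of_mul_le_mul_left ?_ hp
    calc (m + 1) ^ 2 * (D ^ 2 * (2 * (m + 1) + 1))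
        = ((m + 1) ^ 2 * D ^ 2) * (2 * m + 3) := by ring
      _ = 4 * ((2 * m + 1) * (2 * m + 3)) * (C ^ 2 * (2 * m + 1)) := by rw [h2]; ring
      _ ≤ 4 * (4 * (m + 1) ^ 2) * 16 ^ m := by
        have h4 : (2 * m + 1) * (2 * m + 3) ≤ 4 * (m + 1) ^ 2 := by nlinarith
        exact Nat.mul_le_mul (Nat.mul_le_mul_left 4 h4) ih
      _ = (m + 1) ^ 2 * 16 ^ (m + 1) := by ring

lemma lo_choose (k : ℕ) : (k.choose (k / 2)) ^ 2 * k ≤ 4 ^ k := by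
  rcases Nat.even_or_odd' k with ⟨m, rfl | rfl⟩
  · have h := lo_central m
    rw [Nat.mul_div_cancel_left _ (by norm_num), ← Nat.centralBinom_eq_two_mul_choose, pow_mul]
    norm_num
    nlinarith
  · have h := lo_central (m + 1)
    have e : (m + 1).centralBinom = 2 * (2 * m + 1).choose m := by
      rw [Nat.centralBinom_eq_two_mul_choose, show 2 * (m + 1) = (2 * m + 1) + 1 by ring,
        Nat.choose_succ_succ, Nat.choose_symm_half]
      ring
    have e2 : (2 * m + 1) / 2 = m := by omega
    have e3 : (4 : ℕ) ^ (2 * m + 1) = 4 * 16 ^ m := by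
      rw [pow_succ, pow_mul]; norm_num; ring
    rw [e2, e3]
    rw [e, pow_succ 16] at h
    nlinarith

lemma lo_inj (n : ℕ) (v : Fin n → ℝ) (x y : Fin n → Bool)
    (hs : ∑ j, (if x j then (1 : ℝ) else -1) * v j = ∑ j, (if y j then (1 : ℝ) else -1) * v j)
    (h0 : ∀ j, v j = 0 → x j = y j)
    (h1 : ∀ j, v j ≠ 0 → x j = decide (0 < v j) → y j = decide (0 < v j)) : x = y := by
  have hle : ∀ j ∈ Finset.univ, (if x j then (1 : ℝ) else -1) * v j
      ≤ (if y j then (1 : ℝ) else -1) * v j := by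
    intro j _
    by_cases hj : v j = 0
    · simp [hj]
    · have := h1 j hj
      rcases lt_or_gt_of_ne hj with h | h
      · have h' : ¬ 0 < v j := by linarith
        cases hx : x j <;> cases hy : y j <;> simp_all <;> linarith
      · cases hx : x j <;> cases hy : y j <;> simp_all <;> linarith
  have he := (Finset.sum_eq_sum_iff_of_le hle).1 hs
  funext j
  by_cases hj : v j = 0
  · exact h0 j hj
  · have := he j (Finset.mem_univ j)
    have h5 := mul_right_cancel₀ hj this
    clear this he hle h0 h1 hs
    cases hx : x j <;> cases hy : y j <;> simp only [hx, hy] at h5 ⊢ <;> first | rfl | (exfalso; norm_num at h5)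

lemma lo_count (n : ℕ) (v : Fin n → ℝ) (a : ℝ) :
    (Finset.univ.filter fun ε : Fin n → Bool =>
        ∑ j, (if ε j then (1 : ℝ) else -1) * v j = a).card
      ≤ (Fintype.card {j // v j ≠ 0}).choose (Fintype.card {j // v j ≠ 0} / 2)
        * 2 ^ Fintype.card {j // ¬ v j ≠ 0} := by
  have key := Finset.card_le_mul_card_image_of_maps_to
    (s := Finset.univ.filter fun ε : Fin n → Bool =>
        ∑ j, (if ε j then (1 : ℝ) else -1) * v j = a)
    (t := (Finset.univ : Finset ({j // ¬ v j ≠ 0} → Bool)))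
    (f := fun ε j => ε j.1) (fun _ _ => Finset.mem_univ _)
    ((Fintype.card {j // v j ≠ 0}).choose (Fintype.card {j // v j ≠ 0} / 2)) ?_
  · simpa using key
  intro b _
  set F := (Finset.univ.filter fun ε : Fin n → Bool =>
        ∑ j, (if ε j then (1 : ℝ) else -1) * v j = a).filter
        (fun ε => (fun j : {j // ¬ v j ≠ 0} => ε j.1) = b) with hF
  let g : (Fin n → Bool) → Finset {j // v j ≠ 0} :=
    fun ε => Finset.univ.filter fun j => ε j.1 = decide (0 < v j.1)
  have hg : ∀ x ∈ F, ∀ y ∈ F, g x ⊆ g y → x = y := by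
    intro x hx y hy hxy
    simp only [hF, Finset.mem_filter, Finset.mem_univ, true_and] at hx hy
    refine lo_inj n v x y (hx.1.trans hy.1.symm) ?_ ?_
    · intro j hj
      exact congrFun (hx.2.trans hy.2.symm) ⟨j, by simpa using hj⟩
    · intro j hj h
      have : (⟨j, hj⟩ : {j // v j ≠ 0}) ∈ g y := hxy (by simp [g, h])
      simpa [g] using this
  have hc : (F.image g).card = F.card := Finset.card_image_of_injOn
    (fun x hx y hy h => hg x hx y hy (le_of_eq h))
  rw [← hc]
  refine IsAntichain.sperner ?_
  intro A hA B hB hne hsub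
  simp only [Finset.coe_image, Set.mem_image, Finset.mem_coe] at hA hB
  obtain ⟨x, hx, rfl⟩ := hA
  obtain ⟨y, hy, rfl⟩ := hB
  exact hne (by rw [hg x hx y hy hsub])

/-- The Littlewood–Offord anti-concentration bound: for a uniformly random sign vector `x`,
the probability that `⟨x, v⟩ = a` is at most `1/√(‖v‖₀)`. -/
theorem littlewood_offord (n : ℕ) (v : Fin n → ℝ)
    (hv : 0 < (Finset.univ.filter fun j => v j ≠ 0).card) (a : ℝ) :
    ((Finset.univ.filter fun ε : Fin n → Bool =>
        ∑ j, (if ε j then (1 : ℝ) else -1) * v j = a).card : ℝ) / 2 ^ n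
      ≤ 1 / Real.sqrt ((Finset.univ.filter fun j => v j ≠ 0).card) := by
  have h := lo_count n v a
  have hk : Fintype.card {j // v j ≠ 0} = (Finset.univ.filter fun j => v j ≠ 0).card :=
    Fintype.card_subtype _
  have hn : Fintype.card {j // v j ≠ 0} + Fintype.card {j // ¬ v j ≠ 0} = n := by
    have h1 := Fintype.card_subtype_compl (fun j => v j ≠ 0)
    have h2 := Fintype.card_subtype_le (fun j => v j ≠ 0)
    rw [Fintype.card_fin] at h1 h2
    omega
  rw [← hk] at hv ⊢
  generalize Fintype.card {j // v j ≠ 0} = k at *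
  generalize Fintype.card {j // ¬ v j ≠ 0} = l at *
  have hc : ((k.choose (k / 2) : ℕ) : ℝ) * Real.sqrt k ≤ 2 ^ k := by
    have h3 : ((k.choose (k / 2) : ℕ) : ℝ) ^ 2 * k ≤ 4 ^ k := by exact_mod_cast lo_choose k
    refine (sq_le_sq₀ (by positivity) (by positivity)).1 ?_
    rw [mul_pow, Real.sq_sqrt (by positivity), ← pow_mul, mul_comm k 2, pow_mul]
    norm_num
    exact h3
  have hs : 0 < Real.sqrt k := Real.sqrt_pos.2 (by exact_mod_cast hv)
  rw [div_le_div_iff₀ (by positivity) hs, one_mul]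
  have h' := (Nat.cast_le (α := ℝ)).2 h
  push_cast at h'
  calc _ ≤ ((k.choose (k / 2) : ℕ) : ℝ) * 2 ^ l * Real.sqrt k := by gcongr
    _ = (((k.choose (k / 2) : ℕ) : ℝ) * Real.sqrt k) * 2 ^ l := by ring
    _ ≤ 2 ^ k * 2 ^ l := by gcongr
    _ = 2 ^ n := by rw [← pow_add, hn]
end

section
/- Let M be a k × k real symmetric matrix with all diagonal entries equal to 1, let γ_1,…,γ_k ∈ ℝ and let θ ≥ 0. Then there exists a sign vector ε ∈ {−1,1}^k such that for every i ∈ [k], |θ (Mε)_i − γ_i| ≥ θ. -/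
/-- Bang's lemma (isolated by Ball): for a symmetric `k × k` matrix `M` with unit diagonal,
reals `γ₁, …, γ_k` and `θ ≥ 0`, there is a sign vector `ε` with
`|θ (Mε)_i − γ_i| ≥ θ` for all `i`. -/
theorem bang_lemma (k : ℕ) (M : Matrix (Fin k) (Fin k) ℝ) (hsym : M.IsSymm)
    (hdiag : ∀ i, M i i = 1) (γ : Fin k → ℝ) (θ : ℝ) (hθ : 0 ≤ θ) :
    ∃ ε : Fin k → ℝ, (∀ i, ε i = 1 ∨ ε i = -1) ∧
      ∀ i, θ ≤ |θ * M.mulVec ε i - γ i| := by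
  have hfin : (Set.pi Set.univ (fun _ : Fin k => ({1, -1} : Set ℝ))).Finite :=
    Set.Finite.pi fun _ => Set.toFinite _
  obtain ⟨ε, hε, hmax⟩ := Set.exists_max_image _
    (fun x : Fin k → ℝ => θ * dotProduct x (M.mulVec x) - 2 * dotProduct x γ) hfin
    ⟨fun _ => 1, by simp⟩
  have hs : ∀ i, ε i = 1 ∨ ε i = -1 := by simpa [Set.mem_pi] using hε
  refine ⟨ε, hs, fun i => ?_⟩
  have h := hmax (ε + Pi.single i (-2 * ε i)) (by
    simp only [Set.mem_pi, Set.mem_insert_iff, Set.mem_singleton_iff, Pi.add_apply]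
    intro j _
    by_cases hj : j = i
    · subst hj
      rcases hs j with h | h <;> simp [h] <;> norm_num
    · simpa [Pi.single_eq_of_ne hj] using hs j)
  have e : dotProduct ε (M.mulVec (Pi.single i (-2 * ε i))) = -2 * ε i * M.mulVec ε i := by
    rw [Matrix.dotProduct_mulVec, ← Matrix.mulVec_transpose, hsym.eq, dotProduct_single]
    ring
  simp only [Matrix.mulVec_add, add_dotProduct, dotProduct_add, e, single_dotProduct] at h
  have e2 : M.mulVec (Pi.single i (-2 * ε i)) i = -2 * ε i := by
    simp [Matrix.mulVec, dotProduct_single, hdiag]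
  rw [e2] at h
  rcases hs i with h1 | h1 <;> rw [h1] at h
  · exact le_trans (by linarith) (le_abs_self _)
  · exact le_trans (by linarith) (neg_le_abs _)
end

section
/- Let v_1,…,v_m ∈ ℝ^n and let z ∈ ℝ^n satisfy ‖z‖_∞ ≤ 1. Then there exists w ∈ ℝ^n such that: (1) ⟨w, v_i⟩ = ⟨z, v_i⟩ for every i ∈ [m]; (2) ‖w‖_∞ ≤ 1; and (3) the number of coordinates j with w_j ∉ {−1,1} is at most m. -/
open scoped Classical

/-- Linear-algebraic rounding: given `v₁, …, v_m ∈ ℝⁿ` and `z` with `‖z‖_∞ ≤ 1`, there is a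
`w` with the same inner products with each `v_i`, `‖w‖_∞ ≤ 1`, and at most `m` coordinates of
`w` not in `{−1, 1}`. -/
theorem rounding_step (n m : ℕ) (v : Fin m → Fin n → ℝ) (z : Fin n → ℝ)
    (hz : ∀ j, |z j| ≤ 1) :
    ∃ w : Fin n → ℝ,
      (∀ i, ∑ j, w j * v i j = ∑ j, z j * v i j) ∧
      (∀ j, |w j| ≤ 1) ∧
      (Finset.univ.filter fun j => w j ≠ 1 ∧ w j ≠ -1).card ≤ m := by
  let K : Set (Fin n → ℝ) := Set.Icc (fun _ => -1) (fun _ => 1) ∩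
    {w | ∀ i, ∑ j, w j * v i j = ∑ j, z j * v i j}
  have hKmem : ∀ w, w ∈ K ↔ (∀ j, |w j| ≤ 1) ∧
      ∀ i, ∑ j, w j * v i j = ∑ j, z j * v i j := by
    intro w
    simp only [K, Set.mem_inter_iff, Set.mem_Icc, Pi.le_def, Set.mem_setOf_eq, abs_le,
      forall_and]
  have hK : IsCompact K := by
    apply isCompact_Icc.inter_right
    rw [Set.setOf_forall]
    apply isClosed_iInter
    intro i
    exact isClosed_eq (by fun_prop) (by fun_prop)
  obtain ⟨w, hw, hmax⟩ := hK.exists_isMaxOn ⟨z, (hKmem z).2 ⟨hz, fun _ => rfl⟩⟩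
    (f := fun w => ∑ j, w j ^ 2) (by fun_prop)
  obtain ⟨hw1, hw2⟩ := (hKmem w).1 hw
  refine ⟨w, hw2, hw1, ?_⟩
  by_contra! hcard
  set S := Finset.univ.filter fun j => w j ≠ 1 ∧ w j ≠ -1 with hS
  let L : (Fin n → ℝ) →ₗ[ℝ] (Fin m ⊕ {j // j ∉ S} → ℝ) :=
    { toFun := fun u => Sum.elim (fun i => ∑ j, u j * v i j) (fun j => u j.1)
      map_add' := by
        intro a b
        ext (i | j) <;> simp [add_mul, Finset.sum_add_distrib]
      map_smul' := by
        intro a b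
        ext (i | j) <;> simp [mul_assoc, Finset.mul_sum] }
  have hlt : Module.finrank ℝ (Fin m ⊕ {j // j ∉ S} → ℝ) < Module.finrank ℝ (Fin n → ℝ) := by
    have h1 : Fintype.card {j // j ∉ S} = n - S.card := by
      rw [Fintype.card_subtype_compl]; simp
    have h2 : S.card ≤ n := by simpa using Finset.card_le_univ S
    simp only [Module.finrank_fintype_fun_eq_card, Fintype.card_sum, Fintype.card_fin]
    rw [h1]
    omega
  obtain ⟨u, hu, hu0⟩ := (Submodule.ne_bot_iff _).1 (LinearMap.ker_ne_bot_of_finrank_lt (f := L) hlt)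
  have hLu : L u = 0 := hu
  have huv : ∀ i, ∑ j, u j * v i j = 0 := fun i => congrFun hLu (Sum.inl i)
  have huS : ∀ j, j ∉ S → u j = 0 := fun j hj => congrFun hLu (Sum.inr ⟨j, hj⟩)
  have hev : ∀ᶠ e : ℝ in nhdsWithin 0 (Set.Ioi 0), ∀ j, |w j| + e * |u j| ≤ 1 := by
    rw [Filter.eventually_all]
    intro j
    by_cases hj : j ∈ S
    · have hlt1 : |w j| < 1 := by
        refine lt_of_le_of_ne (hw1 j) fun h => ?_
        have := (Finset.mem_filter.1 hj).2
        rcases eq_or_eq_neg_of_abs_eq h with h | h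
        · exact this.1 h
        · exact this.2 h
      have hc : Filter.Tendsto (fun e : ℝ => |w j| + e * |u j|) (nhds 0)
          (nhds (|w j| + 0 * |u j|)) :=
        Continuous.tendsto (by fun_prop) 0
      have := hc.eventually_lt_const (u := 1) (by simpa using hlt1)
      exact (this.filter_mono nhdsWithin_le_nhds).mono fun _ h => h.le
    · simp [huS j hj, hw1 j]
  obtain ⟨e, he, he0⟩ := (hev.and self_mem_nhdsWithin).exists
  have he0 : 0 < e := he0
  have key : ∀ s : ℝ, |s| = e → ∑ j, (w j + s * u j) ^ 2 ≤ ∑ j, w j ^ 2 := by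
    intro s hs
    refine hmax (a := fun j => w j + s * u j) ((hKmem _).2 ⟨fun j => ?_, fun i => ?_⟩)
    · calc |w j + s * u j| ≤ |w j| + |s * u j| := abs_add_le _ _
        _ ≤ 1 := by rw [abs_mul, hs]; exact he j
    · simp only [add_mul, Finset.sum_add_distrib, mul_assoc, ← Finset.mul_sum, huv, hw2]
      simp
  have k1 := key e (abs_of_pos he0)
  have k2 := key (-e) (by rw [abs_neg, abs_of_pos he0])
  have hsum : ∑ j, (w j + e * u j) ^ 2 + ∑ j, (w j + -e * u j) ^ 2 =
      2 * ∑ j, w j ^ 2 + 2 * e ^ 2 * ∑ j, u j ^ 2 := by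
    rw [Finset.mul_sum, Finset.mul_sum, ← Finset.sum_add_distrib, ← Finset.sum_add_distrib]
    exact Finset.sum_congr rfl fun j _ => by ring
  obtain ⟨j, hj⟩ := Function.ne_iff.1 hu0
  have hj : u j ≠ 0 := hj
  have hpos : 0 < ∑ j, u j ^ 2 :=
    Finset.sum_pos' (fun _ _ => sq_nonneg _) ⟨j, Finset.mem_univ _, by positivity⟩
  have : 0 < 2 * e ^ 2 * ∑ j, u j ^ 2 := by positivity
  linarith
end

section
/- There is a constant C > 0 such that the following holds. Let P be a product probability distribution on {−1,1}^n, let σ² > 0 be the variance of Σ_j z_j for z ∼ P, and let A ⊆ {−1,1}^n be an antichain with respect to the coordinatewise partial order. Then Pr_{z∼P}[z ∈ A] ≤ C/σ. -/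
open scoped Classical

/-- The probability of the point of `{−1,1}^n` encoded by `x : Fin n → Bool` under the
product distribution whose `j`-th coordinate equals `1` with probability `p j` and `−1`
with probability `1 - p j`. -/
noncomputable def cubeWeight (n : ℕ) (p : Fin n → ℝ) (x : Fin n → Bool) : ℝ :=
  ∏ j, if x j then p j else 1 - p j

/-- The `±1` vector encoded by `x : Fin n → Bool`. -/
def signVec (n : ℕ) (x : Fin n → Bool) : Fin n → ℝ :=
  fun j => if x j then 1 else -1

lemma centralBinom_sq_bound (m : ℕ) : (2 * m + 1) * m.centralBinom ^ 2 ≤ 16 ^ m := by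
  induction m with
  | zero => simp
  | succ m ih =>
    have h := Nat.succ_mul_centralBinom_succ m
    have h2 : (m+1)^2 * ((2 * (m+1) + 1) * (m+1).centralBinom ^ 2) ≤ (m+1)^2 * 16 ^ (m+1) := by
      calc (m+1)^2 * ((2 * (m+1) + 1) * (m+1).centralBinom ^ 2)
          = (2 * m + 3) * ((m+1) * (m+1).centralBinom) ^ 2 := by ring
        _ = (4 * ((2 * m + 3) * (2 * m + 1))) * ((2 * m + 1) * m.centralBinom ^ 2) := by
            rw [h]; ring
        _ ≤ (4 * (4 * (m+1)^2)) * 16 ^ m := by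
            apply Nat.mul_le_mul _ ih
            nlinarith
        _ = _ := by ring
    exact Nat.le_of_mul_le_mul_left h2 (by positivity)

lemma choose_half_bound (k : ℕ) : (k + 1) * (k.choose (k / 2)) ^ 2 ≤ 4 ^ k := by
  rcases Nat.even_or_odd' k with ⟨m, rfl | rfl⟩
  · have := centralBinom_sq_bound m
    rw [Nat.centralBinom] at this
    rw [Nat.mul_div_cancel_left _ (by norm_num), pow_mul]
    exact this
  · have := centralBinom_sq_bound (m+1)
    have e : (m+1).centralBinom = 2 * (2 * m + 1).choose m := by
      rw [Nat.centralBinom, show 2 * (m+1) = (2 * m + 1) + 1 by ring, Nat.choose_succ_succ,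
        Nat.choose_symm_half]; ring
    have h3 : (2 * m + 1) / 2 = m := by omega
    rw [h3]
    rw [e] at this
    have h4 : (16:ℕ) ^ (m+1) = 4 * 4 ^ (2 * m + 1) := by
      rw [show (16:ℕ) = 4 ^ 2 by norm_num, ← pow_mul]; ring
    rw [h4] at this
    nlinarith [sq_nonneg ((2 * m + 1).choose m)]

lemma choose_half_real (k : ℕ) :
    (1 / 2 : ℝ) ^ k * (k.choose (k / 2)) ≤ Real.sqrt (1 / (k + 1)) := by
  apply Real.le_sqrt_of_sq_le
  have h : ((k : ℝ) + 1) * (k.choose (k / 2)) ^ 2 ≤ 4 ^ k := by exact_mod_cast choose_half_bound k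
  rw [le_div_iff₀ (by positivity), mul_pow, ← pow_mul, mul_comm k 2, pow_mul]
  have e : ((1 / 2 : ℝ) ^ 2) ^ k * 4 ^ k = 1 := by rw [← mul_pow]; norm_num
  have := mul_le_mul_of_nonneg_left h (show 0 ≤ ((1 / 2 : ℝ) ^ 2) ^ k by positivity)
  linarith

lemma sum_cons (n : ℕ) (F : (Fin (n+1) → Bool) → ℝ) :
    ∑ x, F x = (∑ y, F (Fin.cons true y)) + ∑ y, F (Fin.cons false y) := by
  rw [← (Fin.consEquiv (fun _ => Bool)).sum_comp, Fintype.sum_prod_type]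
  simp [Fin.consEquiv]

lemma moments (n : ℕ) : ∀ p : Fin n → ℝ,
    (∑ x, cubeWeight n p x = 1) ∧
    (∑ x, cubeWeight n p x * (∑ j, signVec n x j) = ∑ j, (2 * p j - 1)) ∧
    (∑ x, cubeWeight n p x * (∑ j, signVec n x j) ^ 2 =
      4 * ∑ j, p j * (1 - p j) + (∑ j, (2 * p j - 1)) ^ 2) := by
  induction n with
  | zero => intro p; simp [cubeWeight]
  | succ n ih =>
    intro p
    obtain ⟨h0, h1, h2⟩ := ih (fun j => p j.succ)
    have wt : ∀ y, cubeWeight (n+1) p (Fin.cons true y) =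
        p 0 * cubeWeight n (fun j => p j.succ) y := by
      intro y; simp [cubeWeight, Fin.prod_univ_succ]
    have wf : ∀ y, cubeWeight (n+1) p (Fin.cons false y) =
        (1 - p 0) * cubeWeight n (fun j => p j.succ) y := by
      intro y; simp [cubeWeight, Fin.prod_univ_succ]
    have st : ∀ y : Fin n → Bool, ∑ j, signVec (n+1) (Fin.cons true y) j =
        1 + ∑ j, signVec n y j := by
      intro y; simp [signVec, Fin.sum_univ_succ]
    have sf : ∀ y : Fin n → Bool, ∑ j, signVec (n+1) (Fin.cons false y) j =
        -1 + ∑ j, signVec n y j := by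
      intro y; simp [signVec, Fin.sum_univ_succ]
    have g1 : ∀ c d : ℝ, ∑ y, c * cubeWeight n (fun j => p j.succ) y *
        (d + ∑ j, signVec n y j) = c * (d * ∑ y, cubeWeight n (fun j => p j.succ) y +
        ∑ y, cubeWeight n (fun j => p j.succ) y * ∑ j, signVec n y j) := by
      intro c d
      rw [Finset.mul_sum, ← Finset.sum_add_distrib, Finset.mul_sum]
      exact Finset.sum_congr rfl fun y _ => by ring
    have g2 : ∀ c d : ℝ, ∑ y, c * cubeWeight n (fun j => p j.succ) y *
        (d + ∑ j, signVec n y j) ^ 2 = c * (d ^ 2 * ∑ y, cubeWeight n (fun j => p j.succ) y +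
        2 * d * ∑ y, cubeWeight n (fun j => p j.succ) y * (∑ j, signVec n y j) +
        ∑ y, cubeWeight n (fun j => p j.succ) y * (∑ j, signVec n y j) ^ 2) := by
      intro c d
      rw [Finset.mul_sum, Finset.mul_sum, ← Finset.sum_add_distrib, ← Finset.sum_add_distrib,
        Finset.mul_sum]
      exact Finset.sum_congr rfl fun y _ => by ring
    refine ⟨?_, ?_, ?_⟩
    · rw [sum_cons]; simp only [wt, wf, ← Finset.mul_sum, h0]; ring
    · rw [sum_cons]; simp only [wt, wf, st, sf, g1, h0, h1, Fin.sum_univ_succ]; ring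
    · rw [sum_cons]; simp only [wt, wf, st, sf, g2, h0, h1, h2]
      rw [Fin.sum_univ_succ, Fin.sum_univ_succ (fun j => 2 * p j - 1)]; ring

noncomputable def setW (n : ℕ) (a : Fin n → ℝ) (S : Finset (Fin n)) : ℝ :=
  (∏ j ∈ S, a j) * ∏ j ∈ Finset.univ \ S, (1 - a j)

lemma setW_nonneg {n : ℕ} {a : Fin n → ℝ} (ha : ∀ j, 0 ≤ a j ∧ a j ≤ 1) (S : Finset (Fin n)) :
    0 ≤ setW n a S :=
  mul_nonneg (Finset.prod_nonneg fun j _ => (ha j).1)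
    (Finset.prod_nonneg fun j _ => by linarith [(ha j).2])

lemma setW_gen (n : ℕ) (a : Fin n → ℝ) (t : ℝ) :
    ∑ S ∈ Finset.univ.powerset, setW n a S * t ^ S.card = ∏ j, (a j * t + (1 - a j)) := by
  rw [Finset.prod_add]
  refine Finset.sum_congr rfl fun S _ => ?_
  rw [Finset.prod_mul_distrib, Finset.prod_const, setW]; ring

lemma setW_inv (n : ℕ) (a : Fin n → ℝ) (ha : ∀ j, 0 ≤ a j ∧ a j ≤ 1) (hpos : 0 < ∑ j, a j) :
    ∑ S ∈ Finset.univ.powerset, setW n a S * (1 / (S.card + 1 : ℝ)) ≤ 1 / ∑ j, a j := by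
  set μ := ∑ j, a j with hμ
  have e1 : ∑ S ∈ Finset.univ.powerset, setW n a S * (1 / (S.card + 1 : ℝ)) =
      ∫ t in (0:ℝ)..1, ∑ S ∈ Finset.univ.powerset, setW n a S * t ^ S.card := by
    rw [intervalIntegral.integral_finsetSum]
    · refine Finset.sum_congr rfl fun S _ => ?_
      rw [intervalIntegral.integral_const_mul, integral_pow]; simp
    · intro S _
      exact Continuous.intervalIntegrable (by fun_prop) _ _
  have e2 : ∫ t in (0:ℝ)..1, Real.exp (-μ * (1 - t)) = (1 - Real.exp (-μ)) / μ := by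
    rw [intervalIntegral.integral_eq_sub_of_hasDerivAt
      (f := fun t => Real.exp (-μ * (1 - t)) / μ)]
    · simp; ring
    · intro t _
      have h : HasDerivAt (fun t : ℝ => -μ * (1 - t)) μ t := by
        have := ((hasDerivAt_id t).const_sub 1).const_mul (-μ)
        simpa using this
      have := h.exp.div_const μ
      rwa [mul_div_assoc, div_self hpos.ne', mul_one] at this
    · exact Continuous.intervalIntegrable (by fun_prop) _ _
  rw [e1]
  calc _ ≤ ∫ t in (0:ℝ)..1, Real.exp (-μ * (1 - t)) := by
        apply intervalIntegral.integral_mono_on (by norm_num)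
        · exact Continuous.intervalIntegrable (by fun_prop) _ _
        · exact Continuous.intervalIntegrable (by fun_prop) _ _
        · intro t ht
          rw [setW_gen]
          have : Real.exp (-μ * (1 - t)) = ∏ j, Real.exp (-(a j * (1 - t))) := by
            rw [← Real.exp_sum, Finset.sum_neg_distrib, ← Finset.sum_mul, ← hμ, neg_mul]
          rw [this]
          refine Finset.prod_le_prod (fun j _ => ?_) (fun j _ => ?_)
          · have := mul_nonneg (ha j).1 ht.1
            linarith [(ha j).2]
          · have := Real.add_one_le_exp (-(a j * (1 - t)))
            linarith
    _ = (1 - Real.exp (-μ)) / μ := e2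
    _ ≤ 1 / μ := by
        gcongr
        linarith [Real.exp_pos (-μ)]

lemma setW_sqrt (n : ℕ) (a : Fin n → ℝ) (ha : ∀ j, 0 ≤ a j ∧ a j ≤ 1) (hpos : 0 < ∑ j, a j) :
    ∑ S ∈ Finset.univ.powerset, setW n a S * Real.sqrt (1 / (S.card + 1 : ℝ)) ≤
      Real.sqrt (1 / ∑ j, a j) := by
  apply Real.le_sqrt_of_sq_le
  refine le_trans ?_ (setW_inv n a ha hpos)
  have one : ∑ S ∈ Finset.univ.powerset, setW n a S = 1 := by
    have := setW_gen n a 1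
    simpa using this
  have cs := Finset.sum_mul_sq_le_sq_mul_sq Finset.univ.powerset
    (fun S => Real.sqrt (setW n a S))
    (fun S => Real.sqrt (setW n a S) * Real.sqrt (1 / (S.card + 1 : ℝ)))
  have q : ∀ S, Real.sqrt (setW n a S) * Real.sqrt (setW n a S) = setW n a S := fun S =>
    Real.mul_self_sqrt (setW_nonneg ha S)
  have q' : ∀ S, Real.sqrt (setW n a S) ^ 2 = setW n a S := fun S =>
    Real.sq_sqrt (setW_nonneg ha S)
  have q2 : ∀ S : Finset (Fin n), Real.sqrt (1 / (S.card + 1 : ℝ)) ^ 2 = 1 / (S.card + 1 : ℝ) :=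
    fun S => Real.sq_sqrt (by positivity)
  simp only [← mul_assoc, q, q', mul_pow, q2, one, one_mul] at cs
  exact cs

/-- Sperner on a subcube. -/
lemma sperner_sub (n : ℕ) (A : Finset (Fin n → Bool)) (hA : IsAntichain (· ≤ ·) (A : Set (Fin n → Bool)))
    (m : Fin n → Bool) (S : Finset (Fin n)) :
    (A.filter (fun x => ∀ j ∈ Finset.univ \ S, x j = m j)).card ≤ S.card.choose (S.card / 2) := by
  set B := A.filter (fun x => ∀ j ∈ Finset.univ \ S, x j = m j) with hB
  let φ : (Fin n → Bool) → Finset S := fun x => Finset.univ.filter (fun j : S => x j = true)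
  have key : ∀ x ∈ B, ∀ y ∈ B, φ x ⊆ φ y → x ≤ y := by
    intro x hx y hy h j
    by_cases hj : j ∈ S
    · intro hxj
      have : (⟨j, hj⟩ : S) ∈ φ x := by simp [φ, hxj]
      simpa [φ] using h this
    · rw [(Finset.mem_filter.1 hx).2 j (by simp [hj]), (Finset.mem_filter.1 hy).2 j (by simp [hj])]
  have inj : Set.InjOn φ B := by
    intro x hx y hy h
    exact le_antisymm (key x hx y hy h.le) (key y hy x hx h.ge)
  have anti : IsAntichain (· ⊆ ·) ((B.image φ : Finset (Finset S)) : Set (Finset S)) := by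
    intro s hs t ht hst hle
    simp only [Finset.coe_image, Set.mem_image, Finset.mem_coe] at hs ht
    obtain ⟨x, hx, rfl⟩ := hs
    obtain ⟨y, hy, rfl⟩ := ht
    exact hst (congrArg φ (hA.eq (Finset.mem_filter.1 hx).1 (Finset.mem_filter.1 hy).1
      (key x hx y hy hle)))
  have := anti.sperner
  rw [Finset.card_image_of_injOn inj] at this
  simpa using this

lemma weight_decomp (n : ℕ) (p : Fin n → ℝ) (x : Fin n → Bool) :
    cubeWeight n p x = ∑ S ∈ Finset.univ.powerset,
      setW n (fun j => 2 * min (p j) (1 - p j)) S * ((1 / 2 : ℝ) ^ S.card *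
        if ∀ j ∈ Finset.univ \ S, x j = decide (1 / 2 ≤ p j) then 1 else 0) := by
  have h : cubeWeight n p x = ∏ j, ((2 * min (p j) (1 - p j)) * (1 / 2) +
      (1 - 2 * min (p j) (1 - p j)) * (if x j = decide (1 / 2 ≤ p j) then 1 else 0)) := by
    refine Finset.prod_congr rfl fun j _ => ?_
    by_cases hp : 1 / 2 ≤ p j
    · rw [min_eq_right (by linarith)]
      cases x j <;> simp only [hp] <;> simp <;> ring_nf
    · rw [min_eq_left (by linarith)]
      cases x j <;> simp only [hp] <;> simp <;> ring_nf
  rw [h, Finset.prod_add]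
  refine Finset.sum_congr rfl fun S _ => ?_
  rw [Finset.prod_mul_distrib (f := fun j => 2 * min (p j) (1 - p j)),
    Finset.prod_mul_distrib (f := fun j => 1 - 2 * min (p j) (1 - p j)), Finset.prod_const, setW,
    Finset.prod_ite_zero, Finset.prod_const_one]
  ring


/-- Antichains have small mass under product distributions on the cube: there is a constant
`C > 0` such that for every product distribution `P` on `{−1,1}^n`, if `σ²` is the variance of
`Σ_j z_j` for `z ∼ P` and `σ² > 0`, then every antichain `A` (for the coordinatewise order)
satisfies `Pr_{z∼P}[z ∈ A] ≤ C/σ`. -/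
theorem antichain_product_measure :
    ∃ C : ℝ, 0 < C ∧
      ∀ (n : ℕ) (p : Fin n → ℝ), (∀ j, 0 ≤ p j ∧ p j ≤ 1) →
        ∀ σ2 : ℝ,
          σ2 = (∑ x : Fin n → Bool, cubeWeight n p x * (∑ j, signVec n x j) ^ 2) -
              (∑ x : Fin n → Bool, cubeWeight n p x * (∑ j, signVec n x j)) ^ 2 →
          0 < σ2 →
          ∀ A : Finset (Fin n → Bool),
            IsAntichain (· ≤ ·) ((A.image (signVec n) : Finset (Fin n → ℝ)) : Set (Fin n → ℝ)) →
            ∑ x ∈ A, cubeWeight n p x ≤ C / Real.sqrt σ2 := by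
  refine ⟨2, by norm_num, ?_⟩
  intro n p hp σ2 hσ hpos A hA
  obtain ⟨-, h1, h2⟩ := moments n p
  rw [h1, h2, add_sub_cancel_right] at hσ
  have hA' : IsAntichain (· ≤ ·) (A : Set (Fin n → Bool)) := by
    intro x hx y hy hxy hle
    have hne : signVec n x ≠ signVec n y := by
      intro h
      apply hxy
      funext j
      have := congrFun h j
      simp only [signVec] at this
      cases hxj : x j <;> cases hyj : y j <;> simp [hxj, hyj] at this ⊢ <;> linarith
    refine hA (by simpa using ⟨x, hx, rfl⟩) (by simpa using ⟨y, hy, rfl⟩) hne ?_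
    intro j
    have := hle j
    simp only [signVec]
    cases hxj : x j <;> cases hyj : y j <;> rw [hxj, hyj] at this <;>
      first | exact absurd (this rfl) Bool.false_ne_true | norm_num
  set a : Fin n → ℝ := fun j => 2 * min (p j) (1 - p j) with ha_def
  have ha : ∀ j, 0 ≤ a j ∧ a j ≤ 1 := by
    intro j
    obtain ⟨h0, h1⟩ := hp j
    simp only [ha_def]
    rcases min_cases (p j) (1 - p j) with h | h <;> constructor <;> linarith
  have hμ : σ2 / 2 ≤ ∑ j, a j := by
    rw [hσ, show 4 * (∑ j, p j * (1 - p j)) / 2 = 2 * ∑ j, p j * (1 - p j) by ring,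
      Finset.mul_sum]
    refine Finset.sum_le_sum fun j _ => ?_
    obtain ⟨h0, h1⟩ := hp j
    simp only [ha_def]
    rcases min_cases (p j) (1 - p j) with h | h <;> rw [h.1] <;> nlinarith
  have hμ0 : 0 < ∑ j, a j := by linarith
  calc ∑ x ∈ A, cubeWeight n p x
      = ∑ S ∈ Finset.univ.powerset, setW n a S * ((1 / 2 : ℝ) ^ S.card *
        ((A.filter (fun x => ∀ j ∈ Finset.univ \ S, x j = decide (1 / 2 ≤ p j))).card : ℝ)) := by
        rw [Finset.sum_congr rfl (fun x _ => weight_decomp n p x), Finset.sum_comm]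
        refine Finset.sum_congr rfl fun S _ => ?_
        rw [← Finset.mul_sum, ← Finset.mul_sum, Finset.sum_boole]
    _ ≤ ∑ S ∈ Finset.univ.powerset, setW n a S * Real.sqrt (1 / (S.card + 1 : ℝ)) := by
        refine Finset.sum_le_sum fun S _ => mul_le_mul_of_nonneg_left ?_ (setW_nonneg ha S)
        refine le_trans (mul_le_mul_of_nonneg_left ?_ (by positivity)) (choose_half_real S.card)
        exact_mod_cast sperner_sub n A hA' (fun j => decide (1 / 2 ≤ p j)) S
    _ ≤ Real.sqrt (1 / ∑ j, a j) := setW_sqrt n a ha hμ0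
    _ ≤ Real.sqrt (4 / σ2) := by
        apply Real.sqrt_le_sqrt
        rw [div_le_div_iff₀ hμ0 hpos]
        linarith
    _ = 2 / Real.sqrt σ2 := by
        rw [Real.sqrt_div (by norm_num), show (4:ℝ) = 2 ^ 2 by norm_num,
          Real.sqrt_sq (by norm_num)]
end

section
/- There is a constant C > 0 such that the following holds. Let P be a product probability distribution on {−1,1}^n and let σ² > 0 be the variance of Σ_j z_j for z ∼ P. Then for every vector v ∈ ℝ^n all of whose n coordinates are nonzero and every γ ∈ ℝ, Pr_{z∼P}[⟨v,z⟩ = γ] ≤ C/σ. -/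
open scoped Classical

open Filter Topology

lemma acp_sum_cons (n : ℕ) (f : (Fin (n+1) → Bool) → ℝ) :
    ∑ x, f x = ∑ y : Fin n → Bool, (f (Fin.cons true y) + f (Fin.cons false y)) := by
  rw [← (Fin.consEquiv (fun _ : Fin (n+1) => Bool)).sum_comp, Fintype.sum_prod_type]
  simp [Fin.consEquiv, Finset.sum_add_distrib]

lemma acp_w_cons (n : ℕ) (p : Fin (n+1) → ℝ) (b : Bool) (y : Fin n → Bool) :
    cubeWeight (n+1) p (Fin.cons b y) =
      (if b then p 0 else 1 - p 0) * cubeWeight n (fun j => p j.succ) y := by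
  simp [cubeWeight, Fin.prod_univ_succ]

lemma acp_s_cons (n : ℕ) (b : Bool) (y : Fin n → Bool) :
    ∑ j, signVec (n+1) (Fin.cons b y) j = (if b then 1 else -1) + ∑ j, signVec n y j := by
  simp [signVec, Fin.sum_univ_succ]

lemma acp_w_sum (n : ℕ) (p : Fin n → ℝ) : ∑ x, cubeWeight n p x = 1 := by
  induction n with
  | zero => simp [cubeWeight]
  | succ n ih =>
    rw [acp_sum_cons]
    simp only [acp_w_cons]
    refine Eq.trans ?_ (ih (fun j => p j.succ))
    refine Finset.sum_congr rfl fun y _ => ?_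
    simp
    ring

lemma acp_var (n : ℕ) (p : Fin n → ℝ) :
    (∑ x : Fin n → Bool, cubeWeight n p x * (∑ j, signVec n x j) ^ 2) -
      (∑ x : Fin n → Bool, cubeWeight n p x * (∑ j, signVec n x j)) ^ 2
      = 4 * ∑ j, p j * (1 - p j) := by
  induction n with
  | zero => simp [cubeWeight]
  | succ n ih =>
    have ih' := ih (fun j => p j.succ)
    have h0 := acp_w_sum n (fun j => p j.succ)
    have h2 : (∑ x : Fin (n+1) → Bool, cubeWeight (n+1) p x * (∑ j, signVec (n+1) x j) ^ 2)
       = (∑ y, cubeWeight n (fun j => p j.succ) y) + 2 * (2 * p 0 - 1) *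
         (∑ y, cubeWeight n (fun j => p j.succ) y * (∑ j, signVec n y j)) +
         (∑ y, cubeWeight n (fun j => p j.succ) y * (∑ j, signVec n y j) ^ 2) := by
      rw [acp_sum_cons, Finset.mul_sum, ← Finset.sum_add_distrib, ← Finset.sum_add_distrib]
      refine Finset.sum_congr rfl fun y _ => ?_
      simp only [acp_w_cons, acp_s_cons]
      simp
      ring
    have h1 : (∑ x : Fin (n+1) → Bool, cubeWeight (n+1) p x * (∑ j, signVec (n+1) x j))
       = (2 * p 0 - 1) * (∑ y, cubeWeight n (fun j => p j.succ) y) +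
         (∑ y, cubeWeight n (fun j => p j.succ) y * (∑ j, signVec n y j)) := by
      rw [acp_sum_cons, Finset.mul_sum, ← Finset.sum_add_distrib]
      refine Finset.sum_congr rfl fun y _ => ?_
      simp only [acp_w_cons, acp_s_cons]
      simp
      ring
    rw [h2, h1, h0, Fin.sum_univ_succ]
    linear_combination ih'

lemma acp_factor (p : ℝ) (hp : 0 ≤ p ∧ p ≤ 1) (s : ℝ) :
    ‖(p : ℂ) * Complex.exp ((s : ℂ) * Complex.I) +
      (1 - p : ℂ) * Complex.exp (((-s : ℝ) : ℂ) * Complex.I)‖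
      ≤ Real.exp (-(2 * (p * (1 - p)) * Real.sin s ^ 2)) := by
  have e : (p : ℂ) * Complex.exp ((s : ℂ) * Complex.I) +
      (1 - p : ℂ) * Complex.exp (((-s : ℝ) : ℂ) * Complex.I)
      = ((Real.cos s : ℝ) : ℂ) + (((2 * p - 1) * Real.sin s : ℝ) : ℂ) * Complex.I := by
    rw [Complex.exp_mul_I, Complex.exp_mul_I]
    push_cast
    rw [Complex.cos_neg, Complex.sin_neg]
    ring
  rw [e, Complex.norm_add_mul_I]
  apply Real.sqrt_le_iff.2 ⟨(Real.exp_pos _).le, ?_⟩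
  rw [← Real.exp_nat_mul]
  have := Real.add_one_le_exp (-(4 * (p * (1 - p)) * Real.sin s ^ 2))
  have h2 := Real.sin_sq_add_cos_sq s
  calc _ = -(4 * (p * (1 - p)) * Real.sin s ^ 2) + 1 := by
          linear_combination h2
    _ ≤ _ := this
    _ = _ := by congr 1; push_cast; ring

lemma acp_char (n : ℕ) (p : Fin n → ℝ) (v : Fin n → ℝ) (t : ℝ) :
    ∑ x : Fin n → Bool, (cubeWeight n p x : ℂ) *
        Complex.exp (((t * ∑ j, v j * signVec n x j : ℝ) : ℂ) * Complex.I)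
      = ∏ j, ((p j : ℂ) * Complex.exp (((v j * t : ℝ) : ℂ) * Complex.I) +
      (1 - p j : ℂ) * Complex.exp (((-(v j * t) : ℝ) : ℂ) * Complex.I)) := by
  have h : ∀ j : Fin n, ((p j : ℂ) * Complex.exp (((v j * t : ℝ) : ℂ) * Complex.I) +
      (1 - p j : ℂ) * Complex.exp (((-(v j * t) : ℝ) : ℂ) * Complex.I)) =
      ∑ b : Bool, ((if b then p j else 1 - p j : ℝ) : ℂ) *
        Complex.exp (((t * (v j * (if b then 1 else -1)) : ℝ) : ℂ) * Complex.I) := by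
    intro j
    simp
    ring_nf
  simp_rw [h]
  rw [Finset.prod_univ_sum, Fintype.piFinset_univ]
  refine Finset.sum_congr rfl fun x _ => ?_
  rw [Finset.prod_mul_distrib, ← Complex.exp_sum, ← Finset.sum_mul]
  congr 1
  · rw [cubeWeight, Complex.ofReal_prod]
  · rw [Finset.mul_sum, Complex.ofReal_sum]
    rfl

lemma acp_re (n : ℕ) (p : Fin n → ℝ) (hp : ∀ j, 0 ≤ p j ∧ p j ≤ 1) (v : Fin n → ℝ) (γ t : ℝ) :
    ∑ x : Fin n → Bool, cubeWeight n p x * Real.cos ((∑ j, v j * signVec n x j - γ) * t)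
      ≤ Real.exp (-(∑ j, 2 * (p j * (1 - p j)) * Real.sin (v j * t) ^ 2)) := by
  have e : ∑ x : Fin n → Bool, cubeWeight n p x * Real.cos ((∑ j, v j * signVec n x j - γ) * t)
     = (Complex.exp (((-(γ * t) : ℝ) : ℂ) * Complex.I) *
      ∑ x : Fin n → Bool, (cubeWeight n p x : ℂ) *
        Complex.exp (((t * ∑ j, v j * signVec n x j : ℝ) : ℂ) * Complex.I)).re := by
    rw [Finset.mul_sum, Complex.re_sum]
    refine Finset.sum_congr rfl fun x _ => ?_
    rw [mul_left_comm, ← Complex.exp_add, ← add_mul, ← Complex.ofReal_add,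
      Complex.re_ofReal_mul, Complex.exp_ofReal_mul_I_re]
    congr 2
    ring
  rw [e]
  refine (Complex.re_le_norm _).trans ?_
  rw [norm_mul, Complex.norm_exp_ofReal_mul_I, one_mul, acp_char, norm_prod, ← Finset.sum_neg_distrib,
    Real.exp_sum]
  exact Finset.prod_le_prod (fun _ _ => norm_nonneg _) fun j _ => acp_factor _ (hp j) _

lemma acp_J (c : ℝ) (hc : 0 < c) :
    ∫ s in (0:ℝ)..Real.pi, Real.exp (-(c * Real.sin s ^ 2)) ≤ Real.pi * √(Real.pi / (4 * c)) := by
  have hper : Function.Periodic (fun s => Real.exp (-(c * Real.sin s ^ 2))) Real.pi := by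
    intro s
    simp [Real.sin_add_pi]
  have h1 := hper.intervalIntegral_add_eq 0 (-(Real.pi/2))
  rw [zero_add, show -(Real.pi/2) + Real.pi = Real.pi/2 by ring] at h1
  rw [h1]
  have hpi := Real.pi_pos
  set b := c * (4 / Real.pi ^ 2) with hb
  have hbpos : 0 < b := by positivity
  calc _ ≤ ∫ s in (-(Real.pi/2))..(Real.pi/2), Real.exp (-b * s ^ 2) := by
        apply intervalIntegral.integral_mono_on (by linarith)
          (Continuous.intervalIntegrable (by fun_prop) _ _)
          (Continuous.intervalIntegrable (by fun_prop) _ _)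
        intro s hs
        apply Real.exp_le_exp.2
        have h3 : 2 / Real.pi * |s| ≤ |Real.sin s| :=
          Real.mul_abs_le_abs_sin (abs_le.2 ⟨hs.1, hs.2⟩)
        have h4 : (2 / Real.pi * |s|) ^ 2 ≤ |Real.sin s| ^ 2 :=
          pow_le_pow_left₀ (by positivity) h3 2
        rw [sq_abs, mul_pow, sq_abs] at h4
        have h5 := mul_le_mul_of_nonneg_left h4 hc.le
        have : b * s ^ 2 = c * ((2 / Real.pi) ^ 2 * s ^ 2) := by rw [hb]; ring
        linarith
    _ ≤ ∫ s, Real.exp (-b * s ^ 2) := by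
        rw [intervalIntegral.integral_of_le (by linarith)]
        exact MeasureTheory.setIntegral_le_integral (integrable_exp_neg_mul_sq hbpos)
          (Filter.Eventually.of_forall fun s => (Real.exp_pos _).le)
    _ = √(Real.pi / b) := integral_gaussian b
    _ = _ := by
      rw [show Real.pi / b = Real.pi ^ 2 * (Real.pi / (4 * c)) by rw [hb]; field_simp,
        Real.sqrt_mul (by positivity), Real.sqrt_sq hpi.le]

lemma acp_avg (c : ℝ) (hc : 0 < c) (v : ℝ) (hv : v ≠ 0) (T : ℝ) (hT : 0 < T) :
    ∫ t in (0:ℝ)..T, Real.exp (-(c * Real.sin (v * t) ^ 2))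
      ≤ (T + Real.pi / |v|) * √(Real.pi / (4 * c)) := by
  have hpi := Real.pi_pos
  have hv' : 0 < |v| := abs_pos.2 hv
  have hsin : ∀ t, Real.sin (v * t) ^ 2 = Real.sin (|v| * t) ^ 2 := by
    intro t
    rcases abs_choice v with h | h <;> rw [h]
    rw [neg_mul, Real.sin_neg, neg_sq]
  simp_rw [hsin]
  rw [intervalIntegral.integral_comp_mul_left (fun s => Real.exp (-(c * Real.sin s ^ 2))) hv'.ne',
    mul_zero, smul_eq_mul]
  have hper : Function.Periodic (fun s => Real.exp (-(c * Real.sin s ^ 2))) Real.pi := by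
    intro s
    simp [Real.sin_add_pi]
  set N : ℕ := ⌈|v| * T / Real.pi⌉₊ with hN
  have hN1 : |v| * T ≤ N * Real.pi := by
    have := Nat.le_ceil (|v| * T / Real.pi)
    rwa [div_le_iff₀ hpi] at this
  have hN2 : N * Real.pi ≤ |v| * T + Real.pi := by
    have := (Nat.ceil_lt_add_one (a := |v| * T / Real.pi) (by positivity)).le
    calc N * Real.pi ≤ (|v| * T / Real.pi + 1) * Real.pi := by gcongr
      _ = _ := by field_simp
  have hint := hper.intervalIntegral_add_zsmul_eq (N : ℤ) 0
    (fun _ _ => Continuous.intervalIntegrable (by fun_prop) _ _)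
  simp only [zero_add, zsmul_eq_mul, Int.cast_natCast] at hint
  calc _ ≤ |v|⁻¹ * ∫ s in (0:ℝ)..(N * Real.pi), Real.exp (-(c * Real.sin s ^ 2)) := by
        gcongr
        apply intervalIntegral.integral_mono_interval le_rfl (by positivity) hN1
        · exact Filter.Eventually.of_forall fun s => (Real.exp_pos _).le
        · exact Continuous.intervalIntegrable (by fun_prop) _ _
    _ ≤ |v|⁻¹ * (N * (Real.pi * √(Real.pi / (4 * c)))) := by
        rw [hint]
        gcongr
        exact acp_J c hc
    _ = |v|⁻¹ * ((N * Real.pi) * √(Real.pi / (4 * c))) := by ring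
    _ ≤ |v|⁻¹ * ((|v| * T + Real.pi) * √(Real.pi / (4 * c))) := by gcongr
    _ = _ := by field_simp

lemma acp_cos (a : ℝ) :
    Tendsto (fun T : ℝ => T⁻¹ * ∫ t in (0:ℝ)..T, Real.cos (a * t)) atTop
      (𝓝 (if a = 0 then 1 else 0)) := by
  split_ifs with h
  · subst h
    refine tendsto_const_nhds.congr' ?_
    filter_upwards [eventually_gt_atTop 0] with T hT
    simp [hT.ne']
  · have : ∀ T : ℝ, T⁻¹ * ∫ t in (0:ℝ)..T, Real.cos (a * t) = T⁻¹ * (a⁻¹ * Real.sin (a * T)) := by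
      intro T
      rw [intervalIntegral.integral_comp_mul_left (fun s => Real.cos s) h]
      simp
    simp_rw [this]
    refine squeeze_zero_norm' (a := fun T : ℝ => T⁻¹ * |a⁻¹|) ?_ ?_
    · filter_upwards [eventually_gt_atTop 0] with T hT
      rw [norm_mul, norm_mul, Real.norm_of_nonneg (inv_pos.2 hT).le, Real.norm_eq_abs, Real.norm_eq_abs]
      have := Real.abs_sin_le_one (a * T)
      have h2 : |a⁻¹| * |Real.sin (a * T)| ≤ |a⁻¹| := mul_le_of_le_one_right (abs_nonneg _) this
      gcongr
    · simpa using tendsto_inv_atTop_zero.mul_const |a⁻¹|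

/-- There is a constant `C > 0` such that for every product distribution `P` on `{−1,1}^n`
with `σ² > 0` the variance of `Σ_j z_j` for `z ∼ P`, every fully supported `v ∈ ℝⁿ`
and every `γ`, we have `Pr_{z∼P}[⟨v,z⟩ = γ] ≤ C/σ`. -/
theorem anticoncentration_product_measure :
    ∃ C : ℝ, 0 < C ∧
      ∀ (n : ℕ) (p : Fin n → ℝ), (∀ j, 0 ≤ p j ∧ p j ≤ 1) →
        ∀ σ2 : ℝ,
          σ2 = (∑ x : Fin n → Bool, cubeWeight n p x * (∑ j, signVec n x j) ^ 2) -
              (∑ x : Fin n → Bool, cubeWeight n p x * (∑ j, signVec n x j)) ^ 2 →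
          0 < σ2 →
          ∀ v : Fin n → ℝ, (∀ j, v j ≠ 0) →
            ∀ γ : ℝ,
              ∑ x ∈ Finset.univ.filter fun x : Fin n → Bool =>
                  ∑ j, v j * signVec n x j = γ, cubeWeight n p x
                ≤ C / Real.sqrt σ2 := by
  refine ⟨2, by norm_num, ?_⟩
  intro n p hp σ2 hσ hpos v hv γ
  rw [acp_var] at hσ
  have hw : ∀ j, 0 ≤ p j * (1 - p j) := fun j => mul_nonneg (hp j).1 (by linarith [(hp j).2])
  set Q := ∑ j, p j * (1 - p j) with hQ
  have hQpos : 0 < Q := by linarith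
  set K := √(Real.pi / (4 * (2 * Q))) with hK
  have hKle : K ≤ 2 / √σ2 := by
    have h4 : (2:ℝ) = √4 := by
      rw [show (4:ℝ) = 2 ^ 2 by norm_num, Real.sqrt_sq (by norm_num)]
    rw [h4, ← Real.sqrt_div (by norm_num), hK]
    apply Real.sqrt_le_sqrt
    rw [hσ, div_le_div_iff₀ (by positivity) (by positivity)]
    nlinarith [Real.pi_le_four]
  refine le_trans ?_ hKle
  -- pointwise bound
  have hpt : ∀ t : ℝ,
      ∑ x : Fin n → Bool, cubeWeight n p x * Real.cos ((∑ j, v j * signVec n x j - γ) * t)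
      ≤ ∑ j, (p j * (1 - p j) / Q) * Real.exp (-((2 * Q) * Real.sin (v j * t) ^ 2)) := by
    intro t
    refine (acp_re n p hp v γ t).trans ?_
    have := convexOn_exp.map_sum_le (t := Finset.univ) (w := fun j => p j * (1 - p j) / Q)
      (p := fun j => -((2 * Q) * Real.sin (v j * t) ^ 2))
      (fun j _ => div_nonneg (hw j) hQpos.le)
      (by rw [← Finset.sum_div, ← hQ, div_self hQpos.ne']) (fun _ _ => Set.mem_univ _)
    simp only [smul_eq_mul] at this
    refine le_trans (le_of_eq ?_) this
    rw [← Finset.sum_neg_distrib]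
    congr 1
    refine Finset.sum_congr rfl fun j _ => ?_
    field_simp
  set R := ∑ j, (p j * (1 - p j) / Q) * (Real.pi / |v j|) with hR
  have hT : ∀ T : ℝ, 0 < T →
      ∑ x : Fin n → Bool, cubeWeight n p x *
        (T⁻¹ * ∫ t in (0:ℝ)..T, Real.cos ((∑ j, v j * signVec n x j - γ) * t))
      ≤ K + T⁻¹ * (R * K) := by
    intro T hT
    have h1 : ∑ x : Fin n → Bool, cubeWeight n p x *
        (T⁻¹ * ∫ t in (0:ℝ)..T, Real.cos ((∑ j, v j * signVec n x j - γ) * t))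
        = T⁻¹ * ∫ t in (0:ℝ)..T, ∑ x : Fin n → Bool, cubeWeight n p x *
          Real.cos ((∑ j, v j * signVec n x j - γ) * t) := by
      rw [intervalIntegral.integral_finsetSum, Finset.mul_sum]
      · refine Finset.sum_congr rfl fun x _ => ?_
        rw [intervalIntegral.integral_const_mul]
        ring
      · intro x _
        exact Continuous.intervalIntegrable (by fun_prop) _ _
    rw [h1]
    calc _ ≤ T⁻¹ * ∫ t in (0:ℝ)..T, ∑ j, (p j * (1 - p j) / Q) *
            Real.exp (-((2 * Q) * Real.sin (v j * t) ^ 2)) := by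
          gcongr
          apply intervalIntegral.integral_mono_on hT.le
            (Continuous.intervalIntegrable (by fun_prop) _ _)
            (Continuous.intervalIntegrable (by fun_prop) _ _)
          intro t _
          exact hpt t
      _ = T⁻¹ * ∑ j, (p j * (1 - p j) / Q) *
            ∫ t in (0:ℝ)..T, Real.exp (-((2 * Q) * Real.sin (v j * t) ^ 2)) := by
          rw [intervalIntegral.integral_finsetSum]
          · simp_rw [intervalIntegral.integral_const_mul]
          · intro x _
            exact Continuous.intervalIntegrable (by fun_prop) _ _
      _ ≤ T⁻¹ * ∑ j, (p j * (1 - p j) / Q) * ((T + Real.pi / |v j|) * K) := by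
          gcongr with j _
          · exact div_nonneg (hw j) hQpos.le
          · exact acp_avg (2 * Q) (by positivity) (v j) (hv j) T hT
      _ = T⁻¹ * ((∑ j, p j * (1 - p j) / Q) * T * K + R * K) := by
          congr 1
          rw [hR, Finset.sum_mul, Finset.sum_mul, Finset.sum_mul, ← Finset.sum_add_distrib]
          refine Finset.sum_congr rfl fun j _ => ?_
          ring
      _ = _ := by
          rw [← Finset.sum_div, ← hQ, div_self hQpos.ne']
          field_simp
  have hlim : Tendsto (fun T : ℝ => ∑ x : Fin n → Bool, cubeWeight n p x *
        (T⁻¹ * ∫ t in (0:ℝ)..T, Real.cos ((∑ j, v j * signVec n x j - γ) * t))) atTop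
      (𝓝 (∑ x : Fin n → Bool, cubeWeight n p x *
        (if (∑ j, v j * signVec n x j - γ) = 0 then 1 else 0))) :=
    tendsto_finsetSum _ fun x _ => (acp_cos _).const_mul _
  have hlim2 : Tendsto (fun T : ℝ => K + T⁻¹ * (R * K)) atTop (𝓝 K) := by
    simpa using (tendsto_inv_atTop_zero.mul_const (R * K)).const_add K
  have hfin := le_of_tendsto_of_tendsto hlim hlim2
    (by filter_upwards [eventually_gt_atTop 0] with T h using hT T h)
  refine le_trans (le_of_eq ?_) hfin
  rw [Finset.sum_filter]
  refine Finset.sum_congr rfl fun x _ => ?_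
  simp only [sub_eq_zero, mul_ite, mul_one, mul_zero]
end

section
/- There exist constants C_0 > 1 and C_1 > 1 such that the following holds for every n. Let S = ⌊n^{0.001}⌋ and let v ∈ ℝ^n be a vector whose coordinate set can be partitioned into S parts, giving subvectors v^{(1)},…,v^{(S)}, such that ‖v^{(s)}‖_2 ≥ C_0 ‖v^{(s+1)}‖_2 for all s < S, and such that δ := ‖v^{(S)}‖_2 > 0. Then for every a ∈ ℝ and every b ≥ 2, Pr_{x∼{−1,1}^n}[ |⟨x,v⟩ − a| ≤ b·δ ] < C_1 · exp(−S/C_1 + C_1 · log b). -/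
open scoped Classical

/-- Average of `h` over a random signed sum of the list, started at `u`. -/
noncomputable def ravg : List ℝ → (ℝ → ℝ) → ℝ → ℝ
  | [], h, u => h u
  | x :: l, h, u => (ravg l h (u + x) + ravg l h (u - x)) / 2

lemma ravg_append (l m : List ℝ) (h : ℝ → ℝ) (u : ℝ) :
    ravg (l ++ m) h u = ravg l (ravg m h) u := by
  induction l generalizing u with
  | nil => rfl
  | cons x l ih => simp only [List.cons_append, ravg, ih]

lemma ravg_perm {l m : List ℝ} (p : l.Perm m) (h : ℝ → ℝ) :
    ∀ u, ravg l h u = ravg m h u := by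
  induction p with
  | nil => intro u; rfl
  | cons x _ ih => intro u; simp only [ravg, ih]
  | swap x y l =>
    intro u
    simp only [ravg]
    rw [show u + y + x = u + x + y by ring, show u + y - x = u - x + y by ring,
      show u - y + x = u + x - y by ring, show u - y - x = u - x - y by ring]
    ring
  | trans _ _ ih1 ih2 => intro u; rw [ih1, ih2]

lemma ravg_mono (l : List ℝ) {h k : ℝ → ℝ} (hk : ∀ w, h w ≤ k w) (u : ℝ) :
    ravg l h u ≤ ravg l k u := by
  induction l generalizing u with
  | nil => exact hk u
  | cons x l ih =>
    simp only [ravg]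
    linarith [ih (u + x), ih (u - x)]

lemma ravg_mul (l : List ℝ) (c : ℝ) (h : ℝ → ℝ) (u : ℝ) :
    ravg l (fun w => c * h w) u = c * ravg l h u := by
  induction l generalizing u with
  | nil => rfl
  | cons x l ih => simp only [ravg, ih]; ring

lemma ravg_add (l : List ℝ) (h k : ℝ → ℝ) (u : ℝ) :
    ravg l (fun w => h w + k w) u = ravg l h u + ravg l k u := by
  induction l generalizing u with
  | nil => rfl
  | cons x l ih => simp only [ravg, ih]; ring

lemma ravg_const (l : List ℝ) (c u : ℝ) : ravg l (fun _ => c) u = c := by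
  induction l generalizing u with
  | nil => rfl
  | cons x l ih => simp only [ravg, ih]; ring

lemma ravg_sq (l : List ℝ) (c u : ℝ) :
    ravg l (fun w => (w - c) ^ 2) u = (u - c) ^ 2 + (l.map (· ^ 2)).sum := by
  induction l generalizing u with
  | nil => simp [ravg]
  | cons x l ih => simp only [ravg, ih, List.map_cons, List.sum_cons]; ring

lemma sumsq_nonneg (l : List ℝ) : 0 ≤ (l.map (· ^ 2)).sum := by
  apply List.sum_nonneg
  intro x hx
  obtain ⟨y, _, rfl⟩ := List.mem_map.1 hx
  positivity

lemma ravg_four (l : List ℝ) (u : ℝ) :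
    ravg l (fun w => w ^ 4) u ≤ u ^ 4 + 6 * u ^ 2 * (l.map (· ^ 2)).sum
      + 3 * (l.map (· ^ 2)).sum ^ 2 := by
  induction l generalizing u with
  | nil => simp [ravg]
  | cons x l ih =>
    simp only [ravg, List.map_cons, List.sum_cons]
    have h1 := ih (u + x)
    have h2 := ih (u - x)
    have h3 : 0 ≤ x ^ 4 := by positivity
    nlinarith

/-- One scale contracts the potential. -/
lemma ravg_step (l : List ℝ) (V W u : ℝ) (hV : V = (l.map (· ^ 2)).sum) (hpos : 0 < V)
    (hW : 1000000 * V ≤ W) :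
    ravg l (fun w => V / (V + w ^ 2)) u ≤ 0.996 * (W / (W + u ^ 2)) := by
  have hWpos : 0 < W := by linarith
  have hu2 := sq_nonneg u
  rcases le_total (16 * V) (u ^ 2) with hc | hc
  · have hu : 0 < u ^ 2 := by linarith
    have h1 : ravg l (fun w => V / (V + w ^ 2)) u
        ≤ ravg l (fun w => 2 * V / u ^ 2 + (2 / u ^ 2) * (w - u) ^ 2) u := by
      apply ravg_mono
      intro w
      have e : 2 * V / u ^ 2 + (2 / u ^ 2) * (w - u) ^ 2 = (2 * V + 2 * (w - u) ^ 2) / u ^ 2 := by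
        ring
      rw [e, div_le_div_iff₀ (by positivity) hu]
      have a1 : u ^ 2 ≤ 2 * w ^ 2 + 2 * (w - u) ^ 2 := by nlinarith [sq_nonneg (2 * w - u)]
      have a2 : 0 ≤ w ^ 2 * (w - u) ^ 2 := by positivity
      nlinarith [sq_nonneg V]
    rw [ravg_add, ravg_const, ravg_mul, ravg_sq, ← hV] at h1
    refine h1.trans ?_
    have e : 2 * V / u ^ 2 + 2 / u ^ 2 * ((u - u) ^ 2 + V) = 4 * V / u ^ 2 := by ring
    rw [e, ← mul_div_assoc, div_le_div_iff₀ hu (by positivity)]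
    nlinarith
  · have h1 : ravg l (fun w => V / (V + w ^ 2)) u
        ≤ ravg l (fun w => 1 + ((-(1 / (100 * V))) * (w - 0) ^ 2
            + (1 / (10200 * V ^ 2)) * w ^ 4)) u := by
      apply ravg_mono
      intro w
      have e : 1 + ((-(1 / (100 * V))) * (w - 0) ^ 2 + (1 / (10200 * V ^ 2)) * w ^ 4)
          = (10200 * V ^ 2 - 102 * V * w ^ 2 + w ^ 4) / (10200 * V ^ 2) := by
        field_simp
        ring
      rw [e, div_le_div_iff₀ (by positivity) (by positivity)]
      have : (10200 * V ^ 2 - 102 * V * w ^ 2 + w ^ 4) * (V + w ^ 2) - V * (10200 * V ^ 2)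
          = w ^ 2 * ((w ^ 2 - 50.5 * V) ^ 2 + 7547.75 * V ^ 2) := by ring
      have h2 : 0 ≤ w ^ 2 * ((w ^ 2 - 50.5 * V) ^ 2 + 7547.75 * V ^ 2) := by positivity
      linarith
    rw [ravg_add, ravg_const, ravg_add, ravg_mul, ravg_mul, ravg_sq, ← hV] at h1
    have h4 := ravg_four l u
    rw [← hV] at h4
    have h5 : (1 / (10200 * V ^ 2)) * ravg l (fun w => w ^ 4) u
        ≤ (1 / (10200 * V ^ 2)) * (3 * (u ^ 2 + V) ^ 2) := by
      apply mul_le_mul_of_nonneg_left _ (by positivity)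
      nlinarith [sq_nonneg (u ^ 2)]
    have h6 : 1 + ((-(1 / (100 * V))) * ((u - 0) ^ 2 + V)
        + (1 / (10200 * V ^ 2)) * (3 * (u ^ 2 + V) ^ 2)) ≤ 0.995 := by
      have e : 1 + ((-(1 / (100 * V))) * ((u - 0) ^ 2 + V)
        + (1 / (10200 * V ^ 2)) * (3 * (u ^ 2 + V) ^ 2))
        = (3400 * V ^ 2 - 34 * V * (u ^ 2 + V) + (u ^ 2 + V) ^ 2) / (3400 * V ^ 2) := by
        field_simp
        ring
      rw [e, div_le_iff₀ (by positivity)]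
      nlinarith
    have h7 : 0.995 ≤ 0.996 * (W / (W + u ^ 2)) := by
      rw [← mul_div_assoc, le_div_iff₀ (by positivity)]
      linarith
    linarith

/-- Relation between counting signs and `ravg`. -/
lemma ravg_ofFn (n : ℕ) (v : Fin n → ℝ) (h : ℝ → ℝ) (u : ℝ) :
    ravg (List.ofFn v) h u
      = (∑ ε : Fin n → Bool, h (u + ∑ j, (if ε j then (1 : ℝ) else -1) * v j)) / 2 ^ n := by
  induction n generalizing u with
  | zero => simp [ravg]
  | succ n ih =>
    rw [List.ofFn_succ]
    simp only [ravg]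
    rw [ih, ih, ← (Fin.consEquiv (fun _ : Fin (n + 1) => Bool)).sum_comp, Fintype.sum_prod_type]
    simp only [Fin.consEquiv, Equiv.coe_fn_mk, Fin.sum_univ_succ, Fin.cons_zero, Fin.cons_succ,
      Fintype.sum_bool, if_true, Bool.false_eq_true, if_false, ← add_assoc, one_mul, neg_one_mul,
      ← sub_eq_add_neg]
    rw [pow_succ]
    field_simp

lemma parts_bound (n : ℕ) (v : Fin n → ℝ) (S : ℕ) (part : Fin n → ℕ)
    (hpart : ∀ j, part j ≤ S) (V : ℕ → ℝ)
    (hV : ∀ s, V s = ((((List.finRange n).filter (fun j => part j = s)).map v).map (· ^ 2)).sum)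
    (hstep : ∀ s, 1 ≤ s → s < S → 1000000 * V (s + 1) ≤ V s)
    (hS : 0 < V S) (b : ℝ) (h : ℝ → ℝ)
    (hh : ∀ w, h w ≤ (1 + b ^ 2) * (V S / (V S + w ^ 2))) (d : ℕ) :
    ∀ s, 1 ≤ s → s + d = S → 0 < V s ∧ ∀ W, 1000000 * V s ≤ W → ∀ u,
      ravg (((List.finRange n).filter (fun j => s ≤ part j)).map v) h u
        ≤ (1 + b ^ 2) * 0.996 ^ (d + 1) * (W / (W + u ^ 2)) := by
  induction d with
  | zero =>
    intro s hs hsS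
    obtain rfl : s = S := by omega
    refine ⟨hS, fun W hW u => ?_⟩
    have e : (List.finRange n).filter (fun j => s ≤ part j)
        = (List.finRange n).filter (fun j => part j = s) := by
      apply List.filter_congr
      intro j _
      have := hpart j
      simp only [decide_eq_decide]
      omega
    rw [e]
    refine (ravg_mono _ hh u).trans ?_
    rw [ravg_mul]
    have := ravg_step _ (V s) W u (hV s) hS hW
    rw [mul_assoc]
    apply mul_le_mul_of_nonneg_left _ (by positivity)
    simpa using this
  | succ d ih =>
    intro s hs hsS
    obtain ⟨hp, hb⟩ := ih (s + 1) (by omega) (by omega)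
    have hVs := hstep s hs (by omega)
    have hpos : 0 < V s := by linarith
    refine ⟨hpos, fun W hW u => ?_⟩
    have p : (((List.finRange n).filter (fun j => s ≤ part j)).map v).Perm
        (((List.finRange n).filter (fun j => part j = s)).map v ++
          ((List.finRange n).filter (fun j => s + 1 ≤ part j)).map v) := by
      rw [← List.map_append]
      apply List.Perm.map
      have q := List.filter_append_perm (fun j => decide (part j = s))
        ((List.finRange n).filter (fun j => s ≤ part j))
      rw [List.filter_filter, List.filter_filter] at q
      refine q.symm.trans (List.Perm.of_eq ?_)
      congr 1
      · apply List.filter_congr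
        intro j _
        rw [Bool.eq_iff_iff]
        simp
        omega
      · apply List.filter_congr
        intro j _
        rw [Bool.eq_iff_iff]
        simp
        omega
    rw [ravg_perm p, ravg_append]
    refine (ravg_mono _ (hb (V s) hVs) u).trans ?_
    rw [ravg_mul, pow_succ _ (d + 1), ← mul_assoc, mul_assoc _ 0.996]
    apply mul_le_mul_of_nonneg_left _ (by positivity)
    exact ravg_step _ (V s) W u (hV s) hpos hW



/-- Anti-concentration for vectors with many scales: there are constants `C₀ > 1` and
`C₁ > 1` such that if `v ∈ ℝⁿ` can be partitioned into `S = ⌊n^{0.001}⌋` subvectors with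
successive `ℓ₂`-norm ratios at least `C₀` and smallest scale `δ > 0`, then for every
`a ∈ ℝ` and `b ≥ 2`, a uniformly random sign vector `x` satisfies
`Pr[|⟨x,v⟩ − a| ≤ bδ] < C₁ exp(−S/C₁ + C₁ log b)`. -/
theorem many_scales_anticoncentration :
    ∃ C0 : ℝ, 1 < C0 ∧ ∃ C1 : ℝ, 1 < C1 ∧
      ∀ (n : ℕ) (v : Fin n → ℝ) (S : ℕ), S = ⌊(n : ℝ) ^ (0.001 : ℝ)⌋₊ →
        ∀ part : Fin n → ℕ, (∀ j, part j ∈ Finset.Icc 1 S) →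
          (∀ s : ℕ, 1 ≤ s → s < S →
            C0 * Real.sqrt (∑ j ∈ Finset.univ.filter fun j => part j = s + 1, v j ^ 2)
              ≤ Real.sqrt (∑ j ∈ Finset.univ.filter fun j => part j = s, v j ^ 2)) →
          ∀ δ : ℝ, δ = Real.sqrt (∑ j ∈ Finset.univ.filter fun j => part j = S, v j ^ 2) →
            0 < δ →
            ∀ a b : ℝ, 2 ≤ b →
              ((Finset.univ.filter fun ε : Fin n → Bool =>
                  |(∑ j, (if ε j then (1 : ℝ) else -1) * v j) - a| ≤ b * δ).card : ℝ) / 2 ^ n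
                < C1 * Real.exp (-(S : ℝ) / C1 + C1 * Real.log b) := by
  refine ⟨1000, by norm_num, 1000, by norm_num, ?_⟩
  intro n v S _ part hpart hstep δ hδ hδ0 a b hb
  set V : ℕ → ℝ := fun s => ∑ j ∈ Finset.univ.filter fun j => part j = s, v j ^ 2 with hVdef
  have hVnn : ∀ s, 0 ≤ V s := fun s => Finset.sum_nonneg fun _ _ => sq_nonneg _
  have hV : ∀ s, V s
      = ((((List.finRange n).filter (fun j => part j = s)).map v).map (· ^ 2)).sum := by
    intro s
    rw [List.map_map, ← List.sum_toFinset _ ((List.nodup_finRange n).filter _)]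
    simp only [hVdef]
    apply Finset.sum_congr
    · ext j; simp
    · intros; rfl
  have hδS : δ ^ 2 = V S := by rw [hδ]; exact Real.sq_sqrt (hVnn S)
  have hSpos : 0 < V S := by rw [← hδS]; positivity
  have hS1 : 1 ≤ S := by
    by_contra hcon
    have : V S = 0 := by
      apply Finset.sum_eq_zero
      intro j hj
      have := Finset.mem_Icc.1 (hpart j)
      omega
    linarith
  have hst : ∀ s, 1 ≤ s → s < S → 1000000 * V (s + 1) ≤ V s := by
    intro s h1 h2
    have h3 := hstep s h1 h2
    have h4 := Real.sq_sqrt (hVnn (s + 1))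
    have h5 := Real.sq_sqrt (hVnn s)
    have h6 := pow_le_pow_left₀ (by positivity) h3 2
    rw [mul_pow] at h6
    simp only [hVdef] at h4 h5 ⊢
    rw [h4, h5] at h6
    linarith
  have hh : ∀ w : ℝ, (fun w : ℝ => if |w| ≤ b * δ then (1 : ℝ) else 0) w
      ≤ (1 + b ^ 2) * (V S / (V S + w ^ 2)) := by
    intro w
    dsimp only
    split_ifs with hw
    · rw [← mul_div_assoc, le_div_iff₀ (by positivity)]
      have := pow_le_pow_left₀ (abs_nonneg w) hw 2
      rw [sq_abs, mul_pow, hδS] at this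
      linarith
    · positivity
  obtain ⟨hp1, hmain⟩ := parts_bound n v S part (fun j => (Finset.mem_Icc.1 (hpart j)).2) V hV hst
    hSpos b _ hh (S - 1) 1 le_rfl (by omega)
  have hm := hmain _ le_rfl (-a)
  have e1 : ((List.finRange n).filter (fun j => 1 ≤ part j)).map v = List.ofFn v := by
    rw [List.filter_eq_self.2, List.ofFn_eq_map]
    intro j _
    simpa using (Finset.mem_Icc.1 (hpart j)).1
  rw [e1, ravg_ofFn, Nat.sub_add_cancel hS1] at hm
  have e2 : (((Finset.univ.filter fun ε : Fin n → Bool =>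
                  |(∑ j, (if ε j then (1 : ℝ) else -1) * v j) - a| ≤ b * δ).card : ℕ) : ℝ)
      = ∑ ε : Fin n → Bool,
        (if |-a + ∑ j, (if ε j then (1 : ℝ) else -1) * v j| ≤ b * δ then (1 : ℝ) else 0) := by
    rw [Finset.sum_boole]
    simp only [neg_add_eq_sub]
  rw [e2]
  refine lt_of_le_of_lt hm ?_
  have hfrac : 1000000 * V 1 / (1000000 * V 1 + (-a) ^ 2) ≤ 1 := by
    rw [div_le_one (by positivity)]
    linarith [sq_nonneg (-a)]
  have hpow : (0.996 : ℝ) ^ S ≤ Real.exp (-(S : ℝ) / 1000) := by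
    have : (0.996 : ℝ) ≤ Real.exp (-1 / 1000) := by
      have := Real.add_one_le_exp (-1 / 1000 : ℝ)
      norm_num at this ⊢
      linarith
    calc (0.996 : ℝ) ^ S ≤ Real.exp (-1 / 1000) ^ S := pow_le_pow_left₀ (by norm_num) this S
      _ = Real.exp (-(S : ℝ) / 1000) := by rw [← Real.exp_nat_mul]; congr 1; ring
  have hbb : 1 + b ^ 2 < 1000 * Real.exp (1000 * Real.log b) := by
    have : Real.exp (1000 * Real.log b) = b ^ 1000 := by
      rw [mul_comm, ← Real.rpow_def_of_pos (by linarith)]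
      exact_mod_cast Real.rpow_natCast b 1000
    rw [this]
    have : b ^ 2 ≤ b ^ 1000 := pow_le_pow_right₀ (by linarith) (by norm_num)
    nlinarith
  rw [Real.exp_add]
  calc (1 + b ^ 2) * 0.996 ^ S * (1000000 * V 1 / (1000000 * V 1 + (-a) ^ 2))
      ≤ (1 + b ^ 2) * 0.996 ^ S * 1 := mul_le_mul_of_nonneg_left hfrac (by positivity)
    _ ≤ (1 + b ^ 2) * Real.exp (-(S : ℝ) / 1000) := by
      rw [mul_one]
      exact mul_le_mul_of_nonneg_left hpow (by positivity)
    _ < (1000 * Real.exp (1000 * Real.log b)) * Real.exp (-(S : ℝ) / 1000) :=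
      mul_lt_mul_of_pos_right hbb (Real.exp_pos _)
    _ = _ := by ring
end

section
/- For every constant C_0 > 1 there exists n_0 such that for all n ≥ n_0 the following holds. Let V ∈ ℝ^{k×n} be a matrix with k ≤ n^{0.52} rows v_1,…,v_k. Then there is a partition of the rows [k] = L_1 ∪ L_2 and a partition of the columns [n] = M_1 ∪ M_2 with |M_2| ≤ n^{0.7171} such that: (1) if V' = (v'_{ij}) denotes the submatrix of V with rows L_1 and columns M_1 in which every nonzero row has been rescaled to have ℓ_2-norm one, then for every column j ∈ M_1, Σ_{i∈L_1} (v'_{ij})² < n^{−0.196}; and (2) for every row i ∈ L_2, the coordinates [n] of v_i can be partitioned into S = ⌊n^{0.001}⌋ parts, giving subvectors v_i^{(1)},…,v_i^{(S)} with ‖v_i^{(s)}‖_2 ≥ C_0 ‖v_i^{(s+1)}‖_2 for all s < S, such that the coordinate set of the last part v_i^{(S)} contains M_1. -/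
open scoped Classical

/-- Chains of nested column sets whose mass drops by a factor `A` at each step. -/
inductive MassChain {n : ℕ} (w : Fin n → ℝ) (A : ℝ) : ℕ → Finset (Fin n) → Prop
  | zero : MassChain w A 0 Finset.univ
  | succ {c : ℕ} {Q P : Finset (Fin n)} (h : MassChain w A c Q) (hs : P ⊆ Q)
      (hm : A * ∑ j ∈ P, w j ≤ ∑ j ∈ Q, w j) : MassChain w A (c + 1) P

/-- A row is finished at column set `M` when it has a chain of length `T` ending above `M`. -/
def RowDone {n : ℕ} (w : Fin n → ℝ) (A : ℝ) (T : ℕ) (M : Finset (Fin n)) : Prop :=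
  ∃ P, MassChain w A T P ∧ M ⊆ P

/-- Bookkeeping invariant for a row with accumulated energy `E`. -/
def RowInv {n : ℕ} (w : Fin n → ℝ) (A : ℝ) (T : ℕ) (M : Finset (Fin n)) (E : ℝ) : Prop :=
  (RowDone w A T M ∧ E ≤ T * (1 + Real.log A)) ∨
  ∃ (c : ℕ) (P : Finset (Fin n)), c < T ∧ MassChain w A c P ∧ M ⊆ P ∧
    0 < ∑ j ∈ M, w j ∧ ∑ j ∈ P, w j < A * ∑ j ∈ M, w j ∧
    E ≤ c * (1 + Real.log A) + Real.log ((∑ j ∈ P, w j) / ∑ j ∈ M, w j)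

lemma MassChain.extend {n : ℕ} {w : Fin n → ℝ} {A : ℝ} (hw : ∀ j, 0 ≤ w j)
    {c : ℕ} {P M : Finset (Fin n)} (h : MassChain w A c P) (hM : M ⊆ P)
    (h0 : ∑ j ∈ M, w j = 0) (d : ℕ) : MassChain w A (c + d + 1) M := by
  induction d with
  | zero =>
    refine MassChain.succ h hM ?_
    rw [h0, mul_zero]
    exact Finset.sum_nonneg fun j _ => hw j
  | succ d ih =>
    refine MassChain.succ ih (Finset.Subset.refl _) ?_
    rw [h0, mul_zero]

lemma RowDone.of_zero {n : ℕ} {w : Fin n → ℝ} {A : ℝ} (hw : ∀ j, 0 ≤ w j)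
    {c T : ℕ} {P M : Finset (Fin n)} (h : MassChain w A c P) (hM : M ⊆ P)
    (h0 : ∑ j ∈ M, w j = 0) (hc : c < T) : RowDone w A T M := by
  obtain ⟨d, rfl⟩ := Nat.exists_eq_add_of_lt hc
  exact ⟨M, h.extend hw hM h0 d, Finset.Subset.refl _⟩

lemma RowInv.start {n : ℕ} {w : Fin n → ℝ} {A : ℝ} (hw : ∀ j, 0 ≤ w j) (hA : 1 < A) (T : ℕ) :
    RowInv w A T Finset.univ 0 := by
  have hl : 0 < Real.log A := Real.log_pos hA
  rcases Nat.eq_zero_or_pos T with rfl | hT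
  · exact Or.inl ⟨⟨_, MassChain.zero, Finset.Subset.refl _⟩, by simp⟩
  rcases (Finset.sum_nonneg fun j _ => hw j : 0 ≤ ∑ j, w j).eq_or_lt with h | h
  · exact Or.inl ⟨RowDone.of_zero hw MassChain.zero (Finset.Subset.refl _) h.symm hT,
      by positivity⟩
  · refine Or.inr ⟨0, _, hT, MassChain.zero, Finset.Subset.refl _, h, by nlinarith, ?_⟩
    rw [div_self h.ne']
    simp

lemma RowInv.le {n : ℕ} {w : Fin n → ℝ} {A : ℝ} (hA : 1 < A) {T : ℕ}
    {M : Finset (Fin n)} {E : ℝ} (hw : ∀ j, 0 ≤ w j) (h : RowInv w A T M E) :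
    E ≤ T * (1 + Real.log A) := by
  have hl : 0 < Real.log A := Real.log_pos hA
  rcases h with h | ⟨c, P, hc, -, hMP, hpos, hlt, hE⟩
  · exact h.2
  · have hP : 0 < ∑ j ∈ P, w j :=
      hpos.trans_le (Finset.sum_le_sum_of_subset_of_nonneg hMP fun j _ _ => hw j)
    have h1 : Real.log ((∑ j ∈ P, w j) / ∑ j ∈ M, w j) ≤ Real.log A :=
      Real.log_le_log (by positivity) ((div_le_iff₀ hpos).2 hlt.le)
    have h2 : (c : ℝ) + 1 ≤ T := by exact_mod_cast hc
    nlinarith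

lemma RowDone.mono {n : ℕ} {w : Fin n → ℝ} {A : ℝ} {T : ℕ} {M M' : Finset (Fin n)}
    (h : RowDone w A T M) (hs : M' ⊆ M) : RowDone w A T M' := by
  obtain ⟨P, hP, hM⟩ := h
  exact ⟨P, hP, hs.trans hM⟩

lemma RowInv.step {n : ℕ} {w : Fin n → ℝ} {A : ℝ} (hA : 1 < A) {T : ℕ}
    {M : Finset (Fin n)} {E : ℝ} (hw : ∀ j, 0 ≤ w j) (h : RowInv w A T M E)
    (hd : ¬ RowDone w A T M) {j : Fin n} (hj : j ∈ M) :
    RowInv w A T (M.erase j) (E + w j / ∑ j' ∈ M, w j') := by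
  have hl : 0 < Real.log A := Real.log_pos hA
  rcases h with h | ⟨c, P, hc, hch, hMP, hpos, hlt, hE⟩
  · exact absurd h.1 hd
  have hP : 0 < ∑ j ∈ P, w j :=
    hpos.trans_le (Finset.sum_le_sum_of_subset_of_nonneg hMP fun j _ _ => hw j)
  have hsum := Finset.sum_erase_add M w hj
  have hM' : M.erase j ⊆ P := (Finset.erase_subset _ _).trans hMP
  have hnn : 0 ≤ ∑ x ∈ M.erase j, w x := Finset.sum_nonneg fun j _ => hw j
  have h1 : Real.log ((∑ j ∈ P, w j) / ∑ j ∈ M, w j) ≤ Real.log A :=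
      Real.log_le_log (by positivity) ((div_le_iff₀ hpos).2 hlt.le)
  have h2 : (c : ℝ) + 1 ≤ T := by exact_mod_cast hc
  have hp1 : w j / ∑ j' ∈ M, w j' ≤ 1 := by
    rw [div_le_one hpos]; linarith
  have hE1 : E + w j / ∑ j' ∈ M, w j' ≤ (c + 1) * (1 + Real.log A) := by linarith
  have hE2 : E + w j / ∑ j' ∈ M, w j' ≤ T * (1 + Real.log A) := by nlinarith
  rcases hnn.eq_or_lt with h0 | h0
  · exact Or.inl ⟨RowDone.of_zero hw hch hM' h0.symm hc, hE2⟩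
  by_cases hA' : A * ∑ x ∈ M.erase j, w x ≤ ∑ x ∈ P, w x
  · have hch' := MassChain.succ hch hM' hA'
    rcases (Nat.succ_le_of_lt hc).eq_or_lt with hT | hT
    · exact Or.inl ⟨⟨_, hT ▸ hch', Finset.Subset.refl _⟩, hE2⟩
    · refine Or.inr ⟨c + 1, _, hT, hch', Finset.Subset.refl _, h0, by nlinarith, ?_⟩
      rw [div_self h0.ne', Real.log_one]
      push_cast
      linarith
  · refine Or.inr ⟨c, P, hc, hch, hM', h0, not_le.1 hA', ?_⟩
    have hlog := Real.log_le_sub_one_of_pos (div_pos h0 hpos)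
    rw [Real.log_div h0.ne' hpos.ne'] at hlog
    rw [Real.log_div hP.ne' hpos.ne'] at hE
    rw [Real.log_div hP.ne' h0.ne']
    have : (∑ x ∈ M.erase j, w x) / ∑ x ∈ M, w x = 1 - w j / ∑ x ∈ M, w x := by
      rw [eq_sub_iff_add_eq, ← add_div, hsum, div_self hpos.ne']
    linarith

lemma MassChain.exists_part {n : ℕ} {w : Fin n → ℝ} {D : ℝ} (hD : 0 ≤ D) (hw : ∀ j, 0 ≤ w j)
    {c : ℕ} {P : Finset (Fin n)} (h : MassChain w (D + 1) c P) :
    ∃ part : Fin n → ℕ, (∀ j, 1 ≤ part j ∧ part j ≤ c + 1) ∧ (∀ j, part j = c + 1 ↔ j ∈ P) ∧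
      ∀ s : ℕ, 1 ≤ s → s < c + 1 →
        D * ∑ j ∈ Finset.univ.filter (fun j => part j = s + 1), w j
          ≤ ∑ j ∈ Finset.univ.filter (fun j => part j = s), w j := by
  induction h with
  | zero => exact ⟨fun _ => 1, by simp, by simp, by intro s h1 h2; omega⟩
  | @succ c Q P hch hs hm ih =>
    obtain ⟨part, hr, hQ, hpart⟩ := ih
    refine ⟨fun j => if j ∈ P then c + 2 else part j, ?_, ?_, ?_⟩
    · intro j
      have := hr j
      dsimp only
      split_ifs <;> omega
    · intro j
      have := hr j
      dsimp only
      split_ifs with hj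
      · simp [hj]
      · simp only [hj, iff_false]; omega
    · have e1 : ∀ s ≤ c, Finset.univ.filter (fun j => (if j ∈ P then c + 2 else part j) = s)
          = Finset.univ.filter (fun j => part j = s) := by
        intro s hsc
        ext j
        simp only [Finset.mem_filter, Finset.mem_univ, true_and]
        split_ifs with hj
        · have := (hQ j).2 (hs hj)
          omega
        · rfl
      have e2 : Finset.univ.filter (fun j => (if j ∈ P then c + 2 else part j) = c + 1)
          = Q \ P := by
        ext j
        simp only [Finset.mem_filter, Finset.mem_univ, true_and, Finset.mem_sdiff]
        split_ifs with hj
        · simp [hj]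
        · simp [hj, hQ]
      have e3 : Finset.univ.filter (fun j => (if j ∈ P then c + 2 else part j) = c + 1 + 1)
          = P := by
        ext j
        have := hr j
        simp only [Finset.mem_filter, Finset.mem_univ, true_and]
        split_ifs with hj
        · simp [hj]
        · simp only [hj, iff_false]; omega
      have e4 : Finset.univ.filter (fun j => part j = c + 1) = Q := by
        ext j
        simp [hQ]
      have hsd := Finset.sum_sdiff hs (f := w)
      have hPn : 0 ≤ ∑ j ∈ P, w j := Finset.sum_nonneg fun j _ => hw j
      intro s h1 h2
      rcases lt_trichotomy s c with h | h | h
      · rw [e1 s h.le, e1 (s + 1) h]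
        exact hpart s h1 (by omega)
      · subst h
        rw [e1 s le_rfl, e2]
        have := hpart s h1 (by omega)
        rw [e4] at this
        refine le_trans (mul_le_mul_of_nonneg_left ?_ hD) this
        linarith
      · obtain rfl : s = c + 1 := by omega
        rw [e2, e3]
        linarith

/-- The iteration: deleting heavy columns one at a time must stop within `K` steps. -/
lemma exists_terminal {k n : ℕ} (w : Fin k → Fin n → ℝ) (hw : ∀ i j, 0 ≤ w i j) {A : ℝ} (hA : 1 < A)
    (T K : ℕ) {δ : ℝ} (hK : k * (T * (1 + Real.log A)) < (K + 1 : ℕ) * δ) :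
    ∃ M : Finset (Fin n), Mᶜ.card ≤ K ∧ ∀ j ∈ M,
      ∑ i ∈ Finset.univ.filter (fun i => ¬ RowDone (w i) A T M), w i j / ∑ j' ∈ M, w i j' < δ := by
  by_contra hcon
  push Not at hcon
  have key : ∀ t ≤ K + 1, ∃ (M : Finset (Fin n)) (E : Fin k → ℝ), Mᶜ.card = t ∧
      (∀ i, RowInv (w i) A T M (E i)) ∧ t * δ ≤ ∑ i, E i := by
    intro t
    induction t with
    | zero =>
      intro _
      exact ⟨Finset.univ, fun _ => 0, by simp, fun i => RowInv.start (hw i) hA T, by simp⟩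
    | succ t ih =>
      intro ht
      obtain ⟨M, E, hc, hinv, hsum⟩ := ih (by omega)
      obtain ⟨j, hj, hjs⟩ := hcon M (by omega)
      refine ⟨M.erase j, fun i => E i + if ¬ RowDone (w i) A T M then
        w i j / ∑ j' ∈ M, w i j' else 0, ?_, ?_, ?_⟩
      · rw [Finset.compl_erase, Finset.card_insert_of_notMem (by simpa using hj), hc]
      · intro i
        by_cases hd : RowDone (w i) A T M
        · simp only [hd, not_true_eq_false, if_false, add_zero]
          exact Or.inl ⟨hd.mono (Finset.erase_subset _ _), (hinv i).le hA (hw i)⟩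
        · simp only [hd, not_false_eq_true, if_true]
          exact (hinv i).step hA (hw i) hd hj
      · rw [Finset.sum_add_distrib, ← Finset.sum_filter]
        push_cast
        linarith
  obtain ⟨M, E, -, hinv, hsum⟩ := key (K + 1) le_rfl
  have : ∑ i, E i ≤ ∑ _i : Fin k, (T * (1 + Real.log A)) :=
    Finset.sum_le_sum fun i _ => (hinv i).le hA (hw i)
  rw [Finset.sum_const, Finset.card_univ, Fintype.card_fin, nsmul_eq_mul] at this
  linarith

/-- The decomposition lemma: for every constant `C₀ > 1`, for all large `n`, every matrix
`V ∈ ℝ^{k×n}` with `k ≤ n^{0.52}` admits a partition of its rows `[k] = L₁ ∪ L₂` and of its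
columns `[n] = M₁ ∪ M₂` with `|M₂| ≤ n^{0.7171}` such that:
(1) normalizing each nonzero row of the `L₁ × M₁` submatrix to unit `ℓ₂`-norm, every column
`j ∈ M₁` has squared mass less than `n^{−0.196}`; and
(2) every row in `L₂` has many scales (with ratio constant `C₀` and `S = ⌊n^{0.001}⌋` parts),
and the position of its smallest scale contains `M₁`. -/
theorem decomposition_lemma (C0 : ℝ) (hC0 : 1 < C0) :
    ∃ n0 : ℕ, ∀ n : ℕ, n0 ≤ n → ∀ (k : ℕ) (V : Fin k → Fin n → ℝ),
      (k : ℝ) ≤ (n : ℝ) ^ (0.52 : ℝ) →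
      ∃ (L1 L2 : Finset (Fin k)) (M1 M2 : Finset (Fin n)),
        Disjoint L1 L2 ∧ L1 ∪ L2 = Finset.univ ∧
        Disjoint M1 M2 ∧ M1 ∪ M2 = Finset.univ ∧
        (M2.card : ℝ) ≤ (n : ℝ) ^ (0.7171 : ℝ) ∧
        (∀ j ∈ M1,
          ∑ i ∈ L1, (V i j / Real.sqrt (∑ j' ∈ M1, V i j' ^ 2)) ^ 2
            < (n : ℝ) ^ (-(0.196 : ℝ))) ∧
        (∀ i ∈ L2, ∃ part : Fin n → ℕ,
          (∀ j, part j ∈ Finset.Icc 1 ⌊(n : ℝ) ^ (0.001 : ℝ)⌋₊) ∧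
          (∀ s : ℕ, 1 ≤ s → s < ⌊(n : ℝ) ^ (0.001 : ℝ)⌋₊ →
            C0 * Real.sqrt (∑ j ∈ Finset.univ.filter fun j => part j = s + 1, V i j ^ 2)
              ≤ Real.sqrt (∑ j ∈ Finset.univ.filter fun j => part j = s, V i j ^ 2)) ∧
          (∀ j ∈ M1, part j = ⌊(n : ℝ) ^ (0.001 : ℝ)⌋₊)) := by
  set A : ℝ := C0 ^ 2 + 1 with hAdef
  have hA : 1 < A := by rw [hAdef]; nlinarith
  have hl : 0 < Real.log A := Real.log_pos hA
  have hev : ∀ᶠ n : ℕ in Filter.atTop, 1 + Real.log A ≤ (n : ℝ) ^ (0.0001 : ℝ) :=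
    ((tendsto_rpow_atTop (by norm_num : (0 : ℝ) < 0.0001)).comp
      tendsto_natCast_atTop_atTop).eventually_ge_atTop _
  obtain ⟨n1, hn1⟩ := Filter.eventually_atTop.1 hev
  refine ⟨max n1 1, fun n hn k V hk => ?_⟩
  have hB := hn1 n (le_of_max_le_left hn)
  have hn1 : (1 : ℝ) ≤ n := by exact_mod_cast le_of_max_le_right hn
  have hn0 : (0 : ℝ) < n := by linarith
  have hSpos : 1 ≤ ⌊(n : ℝ) ^ (0.001 : ℝ)⌋₊ :=
    Nat.le_floor (by simpa using Real.one_le_rpow hn1 (by norm_num))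
  have hSle : (⌊(n : ℝ) ^ (0.001 : ℝ)⌋₊ : ℝ) ≤ (n : ℝ) ^ (0.001 : ℝ) :=
    Nat.floor_le (by positivity)
  generalize ⌊(n : ℝ) ^ (0.001 : ℝ)⌋₊ = S at hSpos hSle ⊢
  obtain ⟨T, rfl⟩ := Nat.exists_eq_add_of_le' hSpos
  have hTle : (T : ℝ) ≤ (n : ℝ) ^ (0.001 : ℝ) := by push_cast at hSle; linarith
  have hK : k * (T * (1 + Real.log A)) <
      (⌊(n : ℝ) ^ (0.7171 : ℝ)⌋₊ + 1 : ℕ) * (n : ℝ) ^ (-(0.196 : ℝ)) := by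
    calc (k : ℝ) * (T * (1 + Real.log A))
        ≤ (n : ℝ) ^ (0.52 : ℝ) * ((n : ℝ) ^ (0.001 : ℝ) * (n : ℝ) ^ (0.0001 : ℝ)) := by
          gcongr
      _ = (n : ℝ) ^ (0.7171 : ℝ) * (n : ℝ) ^ (-(0.196 : ℝ)) := by
          rw [← Real.rpow_add hn0, ← Real.rpow_add hn0, ← Real.rpow_add hn0]
          norm_num
      _ < _ := by
          have := Nat.lt_floor_add_one ((n : ℝ) ^ (0.7171 : ℝ))
          push_cast
          gcongr
  obtain ⟨M, hMc, hM⟩ := exists_terminal (fun i j => V i j ^ 2) (fun i j => sq_nonneg _) hA T _ hK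
  refine ⟨Finset.univ.filter (fun i => ¬ RowDone (fun j => V i j ^ 2) A T M),
    Finset.univ.filter (fun i => RowDone (fun j => V i j ^ 2) A T M), M, Mᶜ, ?_, ?_,
    disjoint_compl_right, Finset.union_compl M, ?_, ?_, ?_⟩
  · exact (Finset.disjoint_filter_filter_not _ _ _).symm
  · rw [Finset.union_comm]
    exact Finset.filter_union_filter_not_eq _ _
  · exact (Nat.cast_le.2 hMc).trans (Nat.floor_le (by positivity))
  · intro j hj
    refine lt_of_eq_of_lt (Finset.sum_congr rfl fun i _ => ?_) (hM j hj)
    rw [div_pow, Real.sq_sqrt (Finset.sum_nonneg fun j _ => sq_nonneg _)]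
  · intro i hi
    obtain ⟨P, hP, hMP⟩ := (Finset.mem_filter.1 hi).2
    obtain ⟨part, h1, h2, h3⟩ := hP.exists_part (sq_nonneg C0) (fun j => sq_nonneg _)
    refine ⟨part, fun j => Finset.mem_Icc.2 (h1 j), fun s hs hs' => ?_,
      fun j hj => (h2 j).2 (hMP hj)⟩
    have := Real.sqrt_le_sqrt (h3 s hs hs')
    rwa [Real.sqrt_mul (sq_nonneg C0), Real.sqrt_sq (by linarith)] at this
end
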